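/- arXiv:2003.07201 — 3 statements merged into one kernel-verified Lean document; each statement's English description precedes it below -/
import Mathlib

section
/- Let p be a mixing density, let Σ be a positive definite (n+1)×(n+1) real matrix with top-left n×n block Σ', and let μ ∈ ℝ^{n+1} with first n coordinates μ'. Define the (n+1)-dimensional density q(y) = |Σ|^{-1/2} ∫_0^∞ (ξ/(2π))^{(n+1)/2} e^{-ξ (y-μ)ᵀΣ⁻¹(y-μ)/2} p(ξ) dξ and the n-dimensional density q'(y') = |Σ'|^{-1/2} ∫_0^∞ (ξ/(2π))^{n/2} e^{-ξ (y'-μ')ᵀ(Σ')⁻¹(y'-μ')/2} p(ξ) dξ. Then for every y' ∈ ℝ^n, ∫_ℝ q(y', t) dt = q'(y'); i.e., the consistent elliptical density with scale matrix Σ marginalizes to the consistent elliptical density with scale matrix Σ'. -/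
open MeasureTheory Real Matrix

/-!
An elliptical density is a mixture over `ξ` of normal densities with mean `μ` and covariance matrix
`ξ⁻¹ • S`. Completing the square factors each normal density into the marginal density of the first
block of coordinates times the conditional density of the second one, and the latter integrates
to `1`; so normal densities marginalize, and Tonelli's theorem carries this over to the mixture.
At `y' = μ'` the mixture may diverge, so joint integrability is not available; there both sides are
the Bochner integral of a nonnegative nonintegrable function, hence `0`.
-/

theorem integral_integral_swap_of_nonneg {α β : Type*} [MeasurableSpace α] [MeasurableSpace β]
    {μ : Measure α} {ν : Measure β} [SFinite μ] [SFinite ν] {f : α → β → ℝ}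
    (hf : AEStronglyMeasurable (Function.uncurry f) (μ.prod ν))
    (hf₀ : ∀ᵐ z ∂μ.prod ν, 0 ≤ Function.uncurry f z)
    (hx : ∀ᵐ x ∂μ, Integrable (f x) ν) (hy : ∀ᵐ y ∂ν, Integrable (f · y) μ) :
    ∫ x, ∫ y, f x y ∂ν ∂μ = ∫ y, ∫ x, f x y ∂μ ∂ν := by
  by_cases hint : Integrable (Function.uncurry f) (μ.prod ν)
  · exact integral_integral_swap hint
  -- Both iterated integrals now diverge, so both Bochner integrals take the value `0`.
  have hnorm : (fun x => ∫ y, ‖f x y‖ ∂ν) =ᵐ[μ] fun x => ∫ y, f x y ∂ν := by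
    filter_upwards [Measure.ae_ae_of_ae_prod hf₀] with x hx₀
    exact integral_congr_ae (hx₀.mono fun y hxy => norm_of_nonneg hxy)
  have hnorm' : (fun y => ∫ x, ‖f x y‖ ∂μ) =ᵐ[ν] fun y => ∫ x, f x y ∂μ := by
    filter_upwards [Measure.ae_ae_of_ae_prod
      (Measure.measurePreserving_swap.quasiMeasurePreserving.ae hf₀)] with y hy₀
    exact integral_congr_ae (hy₀.mono fun x hxy => norm_of_nonneg hxy)
  have hdiv : ¬ Integrable (fun x => ∫ y, f x y ∂ν) μ := fun h =>
    hint ((integrable_prod_iff hf).mpr ⟨hx, (integrable_congr hnorm).mpr h⟩)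
  have hdiv' : ¬ Integrable (fun y => ∫ x, f x y ∂μ) ν := fun h =>
    hint ((integrable_prod_iff' hf).mpr ⟨hy, (integrable_congr hnorm').mpr h⟩)
  rw [integral_undef hdiv, integral_undef hdiv']

section Blocks

variable {R m n : Type*} [CommRing R] [Fintype m] [Fintype n] [DecidableEq m] [DecidableEq n]
  {M : Matrix (m ⊕ n) (m ⊕ n) R}

theorem toBlocks_mul_inv (hM : IsUnit M.det) :
    M.toBlocks₁₁ * M⁻¹.toBlocks₁₁ + M.toBlocks₁₂ * M⁻¹.toBlocks₂₁ = 1 ∧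
      M.toBlocks₁₁ * M⁻¹.toBlocks₁₂ + M.toBlocks₁₂ * M⁻¹.toBlocks₂₂ = 0 ∧
      M.toBlocks₂₁ * M⁻¹.toBlocks₁₁ + M.toBlocks₂₂ * M⁻¹.toBlocks₂₁ = 0 ∧
      M.toBlocks₂₁ * M⁻¹.toBlocks₁₂ + M.toBlocks₂₂ * M⁻¹.toBlocks₂₂ = 1 := by
  rw [← fromBlocks_inj, ← fromBlocks_multiply, fromBlocks_toBlocks, fromBlocks_toBlocks,
    fromBlocks_one, mul_nonsing_inv M hM]

theorem inv_toBlocks₁₁ (hM : IsUnit M.det) (hD : IsUnit M⁻¹.toBlocks₂₂.det) :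
    M.toBlocks₁₁⁻¹ =
      M⁻¹.toBlocks₁₁ - M⁻¹.toBlocks₁₂ * M⁻¹.toBlocks₂₂⁻¹ * M⁻¹.toBlocks₂₁ := by
  obtain ⟨h₁₁, h₁₂, -, -⟩ := toBlocks_mul_inv hM
  have hM₁₂ : M.toBlocks₁₂ = -(M.toBlocks₁₁ * M⁻¹.toBlocks₁₂ * M⁻¹.toBlocks₂₂⁻¹) := by
    rw [eq_neg_of_add_eq_zero_left h₁₂, Matrix.neg_mul, neg_neg,
      mul_nonsing_inv_cancel_right _ _ hD]
  refine inv_eq_right_inv ?_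
  rw [← h₁₁, hM₁₂]
  simp only [sub_eq_add_neg, Matrix.mul_add, Matrix.mul_neg, Matrix.neg_mul, Matrix.mul_assoc]

theorem det_mul_det_toBlocks₂₂_inv (hM : IsUnit M.det) :
    M.det * M⁻¹.toBlocks₂₂.det = M.toBlocks₁₁.det := by
  obtain ⟨-, h₁₂, -, h₂₂⟩ := toBlocks_mul_inv hM
  have hmul : M * fromBlocks 1 M⁻¹.toBlocks₁₂ 0 M⁻¹.toBlocks₂₂ =
      fromBlocks M.toBlocks₁₁ 0 M.toBlocks₂₁ 1 := by
    nth_rw 1 [← fromBlocks_toBlocks M]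
    simp only [fromBlocks_multiply, Matrix.mul_one, Matrix.mul_zero, add_zero, h₁₂, h₂₂]
  simpa using congrArg det hmul

end Blocks

theorem posDef_toBlocks₂₂ {R m n : Type*} [Ring R] [PartialOrder R] [StarRing R]
    {M : Matrix (m ⊕ n) (m ⊕ n) R} (hM : M.PosDef) : M.toBlocks₂₂.PosDef :=
  hM.submatrix Sum.inr_injective

theorem rpow_mul_exp_neg_mul_le {a d x : ℝ} (ha : 0 < a) (hd : 0 < d) (hx : 0 ≤ x) :
    x ^ a * exp (-(d * x)) ≤ (a / d) ^ a := by
  have hle : x ≤ a / d * exp (d * x / a) :=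
    calc x = a / d * (d * x / a) := by field_simp
      _ ≤ a / d * exp (d * x / a) := by gcongr; linarith [add_one_le_exp (d * x / a)]
  calc x ^ a * exp (-(d * x)) ≤ (a / d * exp (d * x / a)) ^ a * exp (-(d * x)) := by gcongr
    _ = (a / d) ^ a := by
      rw [mul_rpow (by positivity) (by positivity), ← exp_mul, mul_assoc, ← exp_add,
        div_mul_cancel₀ _ ha.ne', add_neg_cancel, exp_zero, mul_one]

theorem measurable_sumElim_right {ι κ α : Type*} [MeasurableSpace α] (y : ι → α) :
    Measurable fun t : κ → α => Sum.elim y t := by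
  refine measurable_pi_iff.mpr (Sum.rec (fun i => ?_) fun j => ?_)
  · exact measurable_const
  · exact measurable_pi_apply j

section GaussianIntegral

variable {ι : Type*} [Fintype ι]

theorem integral_comp_mulVec [DecidableEq ι] {E : Type*} [NormedAddCommGroup E] [NormedSpace ℝ E]
    {M : Matrix ι ι ℝ} (hM : M.det ≠ 0) (f : (ι → ℝ) → E) :
    ∫ x, f (M *ᵥ x) = |M.det|⁻¹ • ∫ x, f x := by
  have hinj : Function.Injective (toLin' M) :=
    mulVec_injective_of_isUnit ((isUnit_iff_isUnit_det M).mpr hM.isUnit)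
  have hemb : MeasurableEmbedding (toLin' M) :=
    (LinearMap.isClosedEmbedding_of_injective
      (LinearMap.ker_eq_bot.mpr hinj)).measurableEmbedding
  calc ∫ x, f (M *ᵥ x) = ∫ x, f x ∂(volume.map (toLin' M)) := (hemb.integral_map f).symm
    _ = |M.det|⁻¹ • ∫ x, f x := by
      rw [map_matrix_volume_pi_eq_smul_volume_pi hM, integral_smul_measure,
        ENNReal.toReal_ofReal (abs_nonneg _), abs_inv]

theorem integral_exp_neg_mul_dotProduct_self {b : ℝ} (hb : 0 < b) :
    ∫ x : ι → ℝ, exp (-(b * (x ⬝ᵥ x))) = (π / b) ^ ((Fintype.card ι : ℝ) / 2) := by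
  have hprod (x : ι → ℝ) : exp (-(b * (x ⬝ᵥ x))) = ∏ i, exp (-b * x i ^ 2) := by
    simp only [← exp_sum, dotProduct, Finset.mul_sum, ← Finset.sum_neg_distrib, pow_two, neg_mul]
  simp only [hprod]
  rw [integral_fintype_prod_volume_eq_pow fun t => exp (-b * t ^ 2), integral_gaussian,
    sqrt_eq_rpow, ← rpow_mul_natCast (by positivity)]
  congr 1
  ring

open scoped MatrixOrder ComplexOrder in
theorem integral_exp_neg_mul_dotProduct_mulVec [DecidableEq ι] {K : Matrix ι ι ℝ} (hK : K.PosDef)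
    {b : ℝ} (hb : 0 < b) :
    ∫ x : ι → ℝ, exp (-(b * (x ⬝ᵥ (K *ᵥ x)))) =
      K.det ^ (-(1 : ℝ) / 2) * (π / b) ^ ((Fintype.card ι : ℝ) / 2) := by
  obtain ⟨B, hB, rfl⟩ := CStarAlgebra.isStrictlyPositive_iff_eq_star_mul_self.mp
    hK.isStrictlyPositive
  have hdetB : B.det ≠ 0 := ((isUnit_iff_isUnit_det B).mp hB).ne_zero
  have hquad (x : ι → ℝ) : x ⬝ᵥ ((star B * B) *ᵥ x) = (B *ᵥ x) ⬝ᵥ (B *ᵥ x) := by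
    rw [← mulVec_mulVec, dotProduct_mulVec, star_eq_conjTranspose,
      conjTranspose_eq_transpose_of_trivial, vecMul_transpose]
  have hdet : (star B * B).det ^ (-(1 : ℝ) / 2) = |B.det|⁻¹ := by
    rw [det_mul, star_eq_conjTranspose, det_conjTranspose, star_trivial, ← abs_mul_abs_self,
      ← pow_two, neg_div, rpow_neg (by positivity), ← sqrt_eq_rpow, sqrt_sq (abs_nonneg _)]
  simp only [hquad]
  rw [integral_comp_mulVec hdetB fun x => exp (-(b * (x ⬝ᵥ x))),
    integral_exp_neg_mul_dotProduct_self hb, hdet, smul_eq_mul]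

end GaussianIntegral

section Densities

variable {ι κ : Type*} [Fintype ι] [Fintype κ] [DecidableEq ι] [DecidableEq κ]

/-- The density at `y` of the normal distribution with mean `μ` and covariance matrix `ξ⁻¹ • S`:
the component with precision factor `ξ` of an elliptical scale mixture. -/
noncomputable def scaledNormalDensity (S : Matrix ι ι ℝ) (μ : ι → ℝ) (ξ : ℝ) (y : ι → ℝ) : ℝ :=
  S.det ^ (-(1 : ℝ) / 2) * ((ξ / (2 * π)) ^ ((Fintype.card ι : ℝ) / 2) *
    exp (-(ξ * ((y - μ) ⬝ᵥ (S⁻¹ *ᵥ (y - μ)))) / 2))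

/-- The consistent elliptical density with mixing density `p`, scale matrix `S` and location `μ`,
as a mixture of normal densities. It takes the junk value `0` where the mixture diverges, which for
positive definite `S` and integrable `p` can only happen at `y = μ`. -/
noncomputable def ellipticalDensity (p : ℝ → ℝ) (S : Matrix ι ι ℝ) (μ y : ι → ℝ) : ℝ :=
  ∫ ξ in Set.Ioi (0 : ℝ), scaledNormalDensity S μ ξ y * p ξ

theorem ellipticalDensity_eq (p : ℝ → ℝ) (S : Matrix ι ι ℝ) (μ y : ι → ℝ) :
    ellipticalDensity p S μ y = S.det ^ (-(1 : ℝ) / 2) * ∫ ξ in Set.Ioi (0 : ℝ),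
      (ξ / (2 * π)) ^ ((Fintype.card ι : ℝ) / 2) *
        exp (-(ξ * ((y - μ) ⬝ᵥ (S⁻¹ *ᵥ (y - μ)))) / 2) * p ξ := by
  simp only [ellipticalDensity, scaledNormalDensity, ← integral_const_mul, mul_assoc]

theorem measurable_scaledNormalDensity (S : Matrix ι ι ℝ) (μ : ι → ℝ) :
    Measurable fun z : ℝ × (ι → ℝ) => scaledNormalDensity S μ z.1 z.2 := by
  unfold scaledNormalDensity
  have : Measurable fun z : ℝ × (ι → ℝ) => (z.2 - μ) ⬝ᵥ (S⁻¹ *ᵥ (z.2 - μ)) :=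
    Continuous.measurable (by fun_prop)
  fun_prop

theorem scaledNormalDensity_nonneg {S : Matrix ι ι ℝ} (hS : S.PosDef) (μ : ι → ℝ) {ξ : ℝ}
    (hξ : 0 < ξ) (y : ι → ℝ) : 0 ≤ scaledNormalDensity S μ ξ y := by
  have := hS.det_pos
  unfold scaledNormalDensity
  positivity

theorem integral_scaledNormalDensity {S : Matrix ι ι ℝ} (hS : S.PosDef) (μ : ι → ℝ) {ξ : ℝ}
    (hξ : 0 < ξ) : ∫ y, scaledNormalDensity S μ ξ y = 1 := by
  have hexp (y : ι → ℝ) : exp (-(ξ * (y ⬝ᵥ (S⁻¹ *ᵥ y))) / 2) =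
      exp (-(ξ / 2 * (y ⬝ᵥ (S⁻¹ *ᵥ y)))) := by ring_nf
  have hdet : S.det ^ (-(1 : ℝ) / 2) * S⁻¹.det ^ (-(1 : ℝ) / 2) = 1 := by
    rw [← mul_rpow hS.det_pos.le hS.inv.det_pos.le, ← det_mul,
      mul_nonsing_inv S hS.det_pos.ne'.isUnit, det_one, one_rpow]
  have hscale : (ξ / (2 * π)) ^ ((Fintype.card ι : ℝ) / 2) *
      (π / (ξ / 2)) ^ ((Fintype.card ι : ℝ) / 2) = 1 := by
    rw [← mul_rpow (by positivity) (by positivity)]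
    convert one_rpow _ using 2
    field_simp
  simp only [scaledNormalDensity, integral_const_mul]
  rw [integral_sub_right_eq_self (fun x : ι → ℝ => exp (-(ξ * (x ⬝ᵥ (S⁻¹ *ᵥ x))) / 2)) μ]
  simp only [hexp]
  rw [integral_exp_neg_mul_dotProduct_mulVec hS.inv (by positivity), mul_left_comm _ (S⁻¹.det ^ _),
    hscale, mul_one, hdet]

theorem integrable_scaledNormalDensity {S : Matrix ι ι ℝ} (hS : S.PosDef) (μ : ι → ℝ) {ξ : ℝ}
    (hξ : 0 < ξ) : Integrable (scaledNormalDensity S μ ξ) :=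
  .of_integral_ne_zero (by simp [integral_scaledNormalDensity hS μ hξ])

theorem dotProduct_inv_mulVec_sumElim {S : Matrix (ι ⊕ κ) (ι ⊕ κ) ℝ} (hS : S.PosDef)
    (x : ι → ℝ) (u : κ → ℝ) :
    Sum.elim x u ⬝ᵥ (S⁻¹ *ᵥ Sum.elim x u) =
      x ⬝ᵥ (S.toBlocks₁₁⁻¹ *ᵥ x) +
        (u + (S⁻¹.toBlocks₂₂⁻¹ * S⁻¹.toBlocks₂₁) *ᵥ x) ⬝ᵥ
          (S⁻¹.toBlocks₂₂ *ᵥ (u + (S⁻¹.toBlocks₂₂⁻¹ * S⁻¹.toBlocks₂₁) *ᵥ x)) := by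
  have hK := posDef_toBlocks₂₂ hS.inv
  have := invertibleOfIsUnitDet _ hK.det_pos.ne'.isUnit
  have hoff : S⁻¹.toBlocks₁₂ᴴ = S⁻¹.toBlocks₂₁ := congrArg toBlocks₂₁ hS.inv.isHermitian
  have hsq := schur_complement_eq₂₂ S⁻¹.toBlocks₁₁ S⁻¹.toBlocks₁₂ x u hK.isHermitian
  rw [hoff, fromBlocks_toBlocks,
    ← inv_toBlocks₁₁ hS.det_pos.ne'.isUnit hK.det_pos.ne'.isUnit] at hsq
  simpa only [star_trivial, dotProduct_mulVec, add_comm] using hsq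

/-- The marginal density of the first block times the conditional density of the second one, whose
precision matrix is the corresponding block of the precision matrix `S⁻¹`. -/
theorem scaledNormalDensity_sumElim {S : Matrix (ι ⊕ κ) (ι ⊕ κ) ℝ} (hS : S.PosDef)
    (μ : ι ⊕ κ → ℝ) {ξ : ℝ} (hξ : 0 < ξ) (y : ι → ℝ) (t : κ → ℝ) :
    scaledNormalDensity S μ ξ (Sum.elim y t) =
      scaledNormalDensity S.toBlocks₁₁ (μ ∘ Sum.inl) ξ y *
        scaledNormalDensity S⁻¹.toBlocks₂₂⁻¹
          (μ ∘ Sum.inr - (S⁻¹.toBlocks₂₂⁻¹ * S⁻¹.toBlocks₂₁) *ᵥ (y - μ ∘ Sum.inl)) ξ t := by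
  have hA : S.toBlocks₁₁.PosDef := hS.submatrix Sum.inl_injective
  have hK := posDef_toBlocks₂₂ hS.inv
  have hdet : S.det = S.toBlocks₁₁.det * S⁻¹.toBlocks₂₂⁻¹.det := by
    rw [← det_mul_det_toBlocks₂₂_inv hS.det_pos.ne'.isUnit, mul_assoc, ← det_mul,
      mul_nonsing_inv _ hK.det_pos.ne'.isUnit, det_one, mul_one]
  have hsub : Sum.elim y t - μ = Sum.elim (y - μ ∘ Sum.inl) (t - μ ∘ Sum.inr) := by
    ext (i | j) <;> rfl
  have hcard : (Fintype.card (ι ⊕ κ) : ℝ) / 2 = Fintype.card ι / 2 + Fintype.card κ / 2 := by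
    rw [Fintype.card_sum, Nat.cast_add, add_div]
  unfold scaledNormalDensity
  rw [hsub, dotProduct_inv_mulVec_sumElim hS, hcard, rpow_add (by positivity), hdet,
    mul_rpow hA.det_pos.le hK.inv.det_pos.le, nonsing_inv_nonsing_inv _ hK.det_pos.ne'.isUnit,
    ← sub_add, mul_add, neg_add, add_div, exp_add]
  ring

theorem integral_scaledNormalDensity_sumElim {S : Matrix (ι ⊕ κ) (ι ⊕ κ) ℝ} (hS : S.PosDef)
    (μ : ι ⊕ κ → ℝ) {ξ : ℝ} (hξ : 0 < ξ) (y : ι → ℝ) :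
    ∫ t : κ → ℝ, scaledNormalDensity S μ ξ (Sum.elim y t) =
      scaledNormalDensity S.toBlocks₁₁ (μ ∘ Sum.inl) ξ y := by
  simp only [scaledNormalDensity_sumElim hS μ hξ, integral_const_mul,
    integral_scaledNormalDensity (posDef_toBlocks₂₂ hS.inv).inv _ hξ, mul_one]

theorem integrableOn_scaledNormalDensity_mul {p : ℝ → ℝ} (hp : IntegrableOn p (Set.Ioi 0))
    {S : Matrix ι ι ℝ} (hS : S.PosDef) {μ y : ι → ℝ} (hy : y ≠ μ) :
    IntegrableOn (fun ξ => scaledNormalDensity S μ ξ y * p ξ) (Set.Ioi 0) := by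
  have : Nonempty ι := (Function.ne_iff.mp hy).nonempty
  set d := (y - μ) ⬝ᵥ (S⁻¹ *ᵥ (y - μ)) with hd
  have hd₀ : 0 < d := by
    simpa only [star_trivial] using hS.inv.dotProduct_mulVec_pos (sub_ne_zero.mpr hy)
  have hcard : 0 < (Fintype.card ι : ℝ) / 2 := by
    have := Fintype.card_pos (α := ι)
    positivity
  have hdet := hS.det_pos
  refine Integrable.bdd_mul
    (c := S.det ^ (-(1 : ℝ) / 2) * (Fintype.card ι / 2 / (π * d)) ^ ((Fintype.card ι : ℝ) / 2)) hp
    (by unfold scaledNormalDensity; fun_prop) ?_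
  filter_upwards [ae_restrict_mem measurableSet_Ioi] with ξ (hξ : 0 < ξ)
  have hexp : -(ξ * d) / 2 = -(π * d * (ξ / (2 * π))) := by field_simp
  rw [norm_of_nonneg (scaledNormalDensity_nonneg hS μ hξ y), scaledNormalDensity, ← hd, hexp]
  gcongr
  exact rpow_mul_exp_neg_mul_le hcard (by positivity) (by positivity)

theorem elliptical_density_marginal_general [Nonempty κ] {p : ℝ → ℝ}
    (hp : IntegrableOn p (Set.Ioi 0)) (hp₀ : 0 ≤ᵐ[volume.restrict (Set.Ioi 0)] p)
    {S : Matrix (ι ⊕ κ) (ι ⊕ κ) ℝ} (hS : S.PosDef) (μ : ι ⊕ κ → ℝ) (y : ι → ℝ) :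
    ∫ t : κ → ℝ, ellipticalDensity p S μ (Sum.elim y t) =
      ellipticalDensity p S.toBlocks₁₁ (μ ∘ Sum.inl) y := by
  have hmeas : AEStronglyMeasurable
      (Function.uncurry fun (t : κ → ℝ) ξ => scaledNormalDensity S μ ξ (Sum.elim y t) * p ξ)
      (volume.prod (volume.restrict (Set.Ioi 0))) :=
    ((measurable_scaledNormalDensity S μ).comp (measurable_snd.prodMk
      ((measurable_sumElim_right y).comp measurable_fst))).aestronglyMeasurable.mul
        hp.aestronglyMeasurable.comp_snd
  have hnonneg : ∀ᵐ z ∂(volume : Measure (κ → ℝ)).prod (volume.restrict (Set.Ioi (0 : ℝ))),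
      0 ≤ scaledNormalDensity S μ z.2 (Sum.elim y z.1) * p z.2 := by
    filter_upwards [Measure.quasiMeasurePreserving_snd.ae (ae_restrict_mem measurableSet_Ioi),
      Measure.quasiMeasurePreserving_snd.ae hp₀] with z hξ hpξ
    exact mul_nonneg (scaledNormalDensity_nonneg hS μ hξ _) hpξ
  calc ∫ t : κ → ℝ, ellipticalDensity p S μ (Sum.elim y t)
      = ∫ ξ in Set.Ioi (0 : ℝ), ∫ t : κ → ℝ,
          scaledNormalDensity S μ ξ (Sum.elim y t) * p ξ := by
        refine integral_integral_swap_of_nonneg hmeas hnonneg ?_ ?_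
        · filter_upwards [Measure.ae_ne volume (μ ∘ Sum.inr)] with t ht
          exact integrableOn_scaledNormalDensity_mul hp hS fun h => ht (by simp [← h])
        · filter_upwards [ae_restrict_mem measurableSet_Ioi] with ξ hξ
          simp only [scaledNormalDensity_sumElim hS μ hξ]
          exact ((integrable_scaledNormalDensity (posDef_toBlocks₂₂ hS.inv).inv _ hξ).const_mul
            _).mul_const _
    _ = ellipticalDensity p S.toBlocks₁₁ (μ ∘ Sum.inl) y := by
        refine setIntegral_congr_fun measurableSet_Ioi fun ξ hξ => ?_
        simp only [integral_mul_const, integral_scaledNormalDensity_sumElim hS μ hξ]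

theorem ellipticalDensity_submatrix_equiv (p : ℝ → ℝ) (S : Matrix ι ι ℝ) (μ y : ι → ℝ)
    (e : κ ≃ ι) :
    ellipticalDensity p (S.submatrix e e) (μ ∘ e) (y ∘ e) = ellipticalDensity p S μ y := by
  have hquad : (y ∘ e - μ ∘ e) ⬝ᵥ ((S.submatrix e e)⁻¹ *ᵥ (y ∘ e - μ ∘ e)) =
      (y - μ) ⬝ᵥ (S⁻¹ *ᵥ (y - μ)) := by
    rw [inv_submatrix_equiv, submatrix_mulVec_equiv, ← Pi.sub_comp, Function.comp_assoc,
      e.self_comp_symm, Function.comp_id, comp_equiv_dotProduct_comp_equiv]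
  simp only [ellipticalDensity_eq, det_submatrix_equiv_self, hquad, Fintype.card_congr e]

end Densities

theorem integral_ellipticalDensity_snoc {n : ℕ} {p : ℝ → ℝ}
    (hp : IntegrableOn p (Set.Ioi 0)) (hp₀ : 0 ≤ᵐ[volume.restrict (Set.Ioi 0)] p)
    {S : Matrix (Fin (n + 1)) (Fin (n + 1)) ℝ} (hS : S.PosDef) (μ : Fin (n + 1) → ℝ)
    (y : Fin n → ℝ) :
    ∫ t : ℝ, ellipticalDensity p S μ (Fin.snoc y t) =
      ellipticalDensity p (S.submatrix Fin.castSucc Fin.castSucc) (μ ∘ Fin.castSucc) y := by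
  let e : Fin n ⊕ Fin 1 ≃ Fin (n + 1) := finSumFinEquiv
  have hsnoc (t : Fin 1 → ℝ) : (Fin.snoc y (t 0) : Fin (n + 1) → ℝ) ∘ e = Sum.elim y t := by
    rw [← Fin.append_right_eq_snoc]
    exact Fin.append_comp_sumElim
  calc ∫ t : ℝ, ellipticalDensity p S μ (Fin.snoc y t)
      = ∫ t : Fin 1 → ℝ, ellipticalDensity p S μ (Fin.snoc y (t 0)) :=
        ((volume_preserving_funUnique (Fin 1) ℝ).integral_comp'
          fun t => ellipticalDensity p S μ (Fin.snoc y t)).symm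
    _ = ∫ t : Fin 1 → ℝ, ellipticalDensity p (S.submatrix e e) (μ ∘ e) (Sum.elim y t) := by
        simp only [← hsnoc, ellipticalDensity_submatrix_equiv]
    _ = ellipticalDensity p (S.submatrix Fin.castSucc Fin.castSucc) (μ ∘ Fin.castSucc) y :=
        elliptical_density_marginal_general hp hp₀ (hS.submatrix e.injective) _ y

/-- the consistent elliptical density with scale matrix `S` (of size
`(n+1)×(n+1)`) marginalizes, by integrating out the last coordinate, to the consistent
elliptical density with scale matrix `S'`, the top-left `n×n` block of `S`. -/
theorem elliptical_density_marginal
    (n : ℕ) (p : ℝ → ℝ) (hp_meas : Measurable p) (hp_nonneg : ∀ ξ, 0 ≤ p ξ)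
    (hp_zero : ∀ ξ ≤ (0 : ℝ), p ξ = 0)
    (hp_int : ∫ ξ in Set.Ioi (0 : ℝ), p ξ = 1)
    (S : Matrix (Fin (n + 1)) (Fin (n + 1)) ℝ) (hS : S.PosDef)
    (S' : Matrix (Fin n) (Fin n) ℝ)
    (hS' : ∀ i j : Fin n, S' i j = S i.castSucc j.castSucc)
    (μ : Fin (n + 1) → ℝ) (μ' : Fin n → ℝ) (hμ' : ∀ i : Fin n, μ' i = μ i.castSucc)
    (q : (Fin (n + 1) → ℝ) → ℝ)
    (hq : ∀ y : Fin (n + 1) → ℝ,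
      q y = S.det ^ (-(1 : ℝ) / 2) *
        ∫ ξ in Set.Ioi (0 : ℝ),
          (ξ / (2 * π)) ^ (((n : ℝ) + 1) / 2) *
            Real.exp (-(ξ * ((y - μ) ⬝ᵥ (S⁻¹ *ᵥ (y - μ)))) / 2) * p ξ)
    (q' : (Fin n → ℝ) → ℝ)
    (hq' : ∀ y' : Fin n → ℝ,
      q' y' = S'.det ^ (-(1 : ℝ) / 2) *
        ∫ ξ in Set.Ioi (0 : ℝ),
          (ξ / (2 * π)) ^ ((n : ℝ) / 2) *
            Real.exp (-(ξ * ((y' - μ') ⬝ᵥ (S'⁻¹ *ᵥ (y' - μ')))) / 2) * p ξ) :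
    ∀ y' : Fin n → ℝ, (∫ t : ℝ, q (Fin.snoc y' t)) = q' y' := by
  obtain rfl : S' = S.submatrix Fin.castSucc Fin.castSucc := Matrix.ext hS'
  obtain rfl : μ' = μ ∘ Fin.castSucc := funext hμ'
  have hp : IntegrableOn p (Set.Ioi 0) := .of_integral_ne_zero (hp_int ▸ one_ne_zero)
  intro y'
  simpa [ellipticalDensity_eq, hq, hq'] using
    integral_ellipticalDensity_snoc hp (ae_of_all _ hp_nonneg) hS μ y'
end

section
/- (Kano's characterization, converse direction.) Suppose for each n ≥ 1 we are given a measurable function f_n : [0,∞) → [0,∞) such that ∫_{ℝ^n} f_n(‖y‖²) dy = 1 and such that for all n ≥ 1 and all u ≥ 0, ∫_ℝ f_{n+1}(u + t²) dt = f_n(u). Then there exists a probability measure ν on ℝ with ν((-∞,0]) = 0 such that for every n ≥ 1 and Lebesgue-almost every u ≥ 0, f_n(u) = ∫ (ξ/(2π))^{n/2} e^{-uξ/2} dν(ξ). -/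
open MeasureTheory Real

/-!
In polar coordinates, integrating `n` coordinates out of a spherical density is a Riemann–Liouville
fractional integral of order `n / 2` of its generator. For every `N`, integrating out all
`2 * N + 2` coordinates therefore exhibits the generator `g₀` of dimension `0` of a consistent
family in the form `∫ (1 - u / r)₊ ^ N dμ(r)`, with `μ` a probability measure on `(0, ∞)`. The
truncated power is within `8 / N` of `exp (-u * N / r)`, so `g₀` is a limit of Laplace transforms of
probability measures. In the variable `x = exp (-N / r)` these measures live on the compact space
`[0, 1]`, and `g₀(u)` is the integral of `x ^ u` against a limit point of theirs; no mass escapes to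
`0` or `1` because `g₀` tends to `1` at `0` and to `0` at infinity. So `g₀` is the Laplace transform
of a probability measure on `(0, ∞)`, that is, `g₀` is the generator of dimension `0` of a mixture
of Gaussians. Since `g k u = π * ∫ s in Ioi u, g (k + 2) s`, a consistent family is determined by
`g₀`, and the two families agree.
-/

open Set Filter Topology
open scoped ENNReal

/-! ### Marginals of spherical density generators -/

section

variable {E : Type*} [NormedAddCommGroup E] [NormedSpace ℝ E] [FiniteDimensional ℝ E]
  [Nontrivial E] [MeasurableSpace E] [BorelSpace E]

theorem lintegral_fun_norm_addHaar (μ : Measure E) [μ.IsAddHaarMeasure] {A : ℝ → ℝ≥0∞}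
    (hA : Measurable A) :
    ∫⁻ x, A ‖x‖ ∂μ = μ.toSphere univ *
      ∫⁻ r in Ioi (0 : ℝ), ENNReal.ofReal (r ^ (Module.finrank ℝ E - 1)) * A r := by
  calc ∫⁻ x, A ‖x‖ ∂μ
    _ = ∫⁻ x : ({0}ᶜ : Set E), A ‖(x : E)‖ ∂μ.comap (↑) := by
      rw [lintegral_subtype_comap (measurableSet_singleton _).compl fun x ↦ A ‖x‖,
        restrict_compl_singleton]
    _ = ∫⁻ x, A x.2 ∂μ.toSphere.prod (.volumeIoiPow (Module.finrank ℝ E - 1)) := by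
      simpa using μ.measurePreserving_homeomorphUnitSphereProd.lintegral_comp_emb
        (Homeomorph.measurableEmbedding _) (A ∘ Subtype.val ∘ Prod.snd)
    _ = μ.toSphere univ * ∫⁻ r : Ioi (0 : ℝ), A r ∂.volumeIoiPow (Module.finrank ℝ E - 1) := by
      rw [lintegral_prod _ (by fun_prop)]
      simp only [lintegral_const, mul_comm]
    _ = _ := by
      rw [Measure.volumeIoiPow, lintegral_withDensity_eq_lintegral_mul _ (by fun_prop)
        (by fun_prop)]
      congr 1
      exact lintegral_subtype_comap measurableSet_Ioi fun r : ℝ ↦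
        ENNReal.ofReal (r ^ (Module.finrank ℝ E - 1)) * A r

end

theorem image_add_sq_Ioi (u : ℝ) : (fun r : ℝ ↦ u + r ^ 2) '' Ioi 0 = Ioi u := by
  ext s
  constructor
  · rintro ⟨r, hr : 0 < r, rfl⟩
    simpa using pow_pos hr 2
  · intro hs
    have hs : 0 < s - u := sub_pos.2 hs
    exact ⟨√(s - u), sqrt_pos.2 hs, by simp [sq_sqrt hs.le]⟩

theorem lintegral_Ioi_comp_add_sq (B : ℝ → ℝ≥0∞) (u : ℝ) :
    ∫⁻ r in Ioi 0, ENNReal.ofReal (2 * r) * B (u + r ^ 2) = ∫⁻ s in Ioi u, B s := by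
  have hderiv : ∀ r ∈ Ioi (0 : ℝ), HasDerivWithinAt (fun r ↦ u + r ^ 2) (2 * r) (Ioi 0) r :=
    fun r _ ↦ by simpa using ((hasDerivAt_id r).pow 2).const_add u |>.hasDerivWithinAt
  have hinj : InjOn (fun r : ℝ ↦ u + r ^ 2) (Ioi 0) := fun r hr s hs h ↦
    (pow_left_inj₀ (le_of_lt hr) (le_of_lt hs) two_ne_zero).1 (add_left_cancel h)
  rw [← image_add_sq_Ioi u,
    lintegral_image_eq_lintegral_abs_deriv_mul measurableSet_Ioi hderiv hinj]
  refine setLIntegral_congr_fun measurableSet_Ioi fun r (hr : 0 < r) ↦ ?_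
  simp only [abs_of_pos (mul_pos two_pos hr)]

/-- The generator obtained from the spherical density generator `A` by integrating out `n`
coordinates. -/
noncomputable def sphericalMarginal (n : ℕ) (A : ℝ → ℝ≥0∞) (u : ℝ) : ℝ≥0∞ :=
  ∫⁻ y : Fin n → ℝ, A (u + ∑ i, y i ^ 2)

section SphericalMarginal

variable {A B : ℝ → ℝ≥0∞} {n : ℕ} {u : ℝ}

theorem measurable_sphericalMarginal (hA : Measurable A) :
    Measurable (sphericalMarginal n A) :=
  Measurable.lintegral_prod_right'
    (f := fun p : ℝ × (Fin n → ℝ) ↦ A (p.1 + ∑ i, p.2 i ^ 2)) (by fun_prop)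

theorem sphericalMarginal_zero : sphericalMarginal 0 A u = A u := by
  simp [sphericalMarginal, volume_pi]

theorem sphericalMarginal_one : sphericalMarginal 1 A u = ∫⁻ t : ℝ, A (u + t ^ 2) := by
  simp only [sphericalMarginal, Finset.univ_unique, Finset.sum_singleton]
  exact (volume_preserving_funUnique (Fin 1) ℝ).lintegral_comp_emb
    (MeasurableEquiv.measurableEmbedding _) fun t ↦ A (u + t ^ 2)

theorem sphericalMarginal_succ (hA : Measurable A) :
    sphericalMarginal (n + 1) A u = sphericalMarginal n (sphericalMarginal 1 A) u := by
  have hone : sphericalMarginal 1 A = fun u ↦ ∫⁻ t, A (u + t ^ 2) :=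
    funext fun _ ↦ sphericalMarginal_one
  rw [hone, sphericalMarginal, ← (volume_preserving_piFinSuccAbove (fun _ : Fin (n + 1) ↦ ℝ)
    0).symm.lintegral_comp_emb (MeasurableEquiv.measurableEmbedding _), Measure.volume_eq_prod,
    lintegral_prod_symm _ (by fun_prop)]
  simp [sphericalMarginal, Fin.sum_univ_succ, MeasurableEquiv.piFinSuccAbove, add_left_comm,
    add_comm]

theorem sphericalMarginal_eq_lintegral_euclideanSpace (n : ℕ) (A : ℝ → ℝ≥0∞) (u : ℝ) :
    sphericalMarginal n A u = ∫⁻ x : EuclideanSpace ℝ (Fin n), A (u + ‖x‖ ^ 2) := by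
  rw [sphericalMarginal, ← (PiLp.volume_preserving_ofLp (Fin n)).lintegral_comp_emb
    (MeasurableEquiv.toLp 2 (Fin n → ℝ)).symm.measurableEmbedding]
  simp [EuclideanSpace.real_norm_sq_eq]

theorem toSphere_euclideanSpace_univ (hn : n ≠ 0) :
    (volume : Measure (EuclideanSpace ℝ (Fin n))).toSphere univ =
      ENNReal.ofReal (2 * √π ^ n / Gamma (n / 2)) := by
  have : Nonempty (Fin n) := ⟨⟨0, hn.bot_lt⟩⟩
  have hn' : (0:ℝ) < n / 2 := by positivity
  have hG := (Gamma_pos_of_pos hn').ne'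
  rw [Measure.toSphere_apply_univ, EuclideanSpace.volume_ball, finrank_euclideanSpace_fin,
    Fintype.card_fin, Gamma_add_one hn'.ne', ENNReal.ofReal_one, one_pow, one_mul,
    ← ENNReal.ofReal_natCast, ← ENNReal.ofReal_mul n.cast_nonneg]
  congr 1
  field_simp

theorem sphericalMarginal_eq_lintegral_Ioi (hn : n ≠ 0) (hA : Measurable A) (u : ℝ) :
    sphericalMarginal n A u = ENNReal.ofReal (√π ^ n / Gamma (n / 2)) *
      ∫⁻ s in Ioi u, ENNReal.ofReal ((s - u) ^ ((n : ℝ) / 2 - 1)) * A s := by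
  have : NeZero n := ⟨hn⟩
  have hpow {r : ℝ} (hr : 0 < r) : r ^ (n - 1) = r * (r ^ 2) ^ ((n : ℝ) / 2 - 1) := by
    rw [← rpow_natCast_mul hr.le, ← rpow_natCast, Nat.cast_pred hn.bot_lt]
    nth_rw 2 [← rpow_one r]
    rw [← rpow_add hr]
    congr 1
    push_cast
    ring
  have hradial : ∫⁻ s in Ioi u, ENNReal.ofReal ((s - u) ^ ((n : ℝ) / 2 - 1)) * A s =
      2 * ∫⁻ r in Ioi 0, ENNReal.ofReal (r ^ (n - 1)) * A (u + r ^ 2) := by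
    rw [← lintegral_Ioi_comp_add_sq, ← lintegral_const_mul _ (by fun_prop)]
    refine setLIntegral_congr_fun measurableSet_Ioi fun r (hr : 0 < r) ↦ ?_
    simp only [add_sub_cancel_left, hpow hr, ENNReal.ofReal_mul hr.le,
      ENNReal.ofReal_mul two_pos.le, ENNReal.ofReal_ofNat, mul_assoc]
  rw [sphericalMarginal_eq_lintegral_euclideanSpace,
    lintegral_fun_norm_addHaar _ (A := fun r ↦ A (u + r ^ 2)) (by fun_prop),
    toSphere_euclideanSpace_univ hn, hradial, finrank_euclideanSpace_fin, ← mul_assoc,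
    mul_div_assoc, ENNReal.ofReal_mul two_pos.le, ENNReal.ofReal_ofNat, mul_comm 2]

theorem sphericalMarginal_two (hA : Measurable A) (u : ℝ) :
    sphericalMarginal 2 A u = ENNReal.ofReal π * ∫⁻ s in Ioi u, A s := by
  simp [sphericalMarginal_eq_lintegral_Ioi two_ne_zero hA, sq_sqrt pi_pos.le]

theorem quasiMeasurePreserving_add_sum_sq (hn : n ≠ 0) (u : ℝ) :
    Measure.QuasiMeasurePreserving (fun y : Fin n → ℝ ↦ u + ∑ i, y i ^ 2) volume
      (volume.restrict (Ioi u)) := by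
  have hmeas : Measurable fun y : Fin n → ℝ ↦ u + ∑ i, y i ^ 2 := by fun_prop
  refine ⟨hmeas, Measure.AbsolutelyContinuous.mk fun s hs hnull ↦ ?_⟩
  have hvol : volume ((fun y : Fin n → ℝ ↦ u + ∑ i, y i ^ 2) ⁻¹' s) =
      sphericalMarginal n (s.indicator 1) u := by
    rw [← lintegral_indicator_one (hmeas hs)]
    rfl
  have hzero : ∫⁻ r in Ioi u, ENNReal.ofReal ((r - u) ^ ((n : ℝ) / 2 - 1)) * s.indicator 1 r =
      ∫⁻ _ in Ioi u, 0 := by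
    refine lintegral_congr_ae ?_
    filter_upwards [measure_eq_zero_iff_ae_notMem.1 hnull] with r hr
    rw [indicator_of_notMem hr, mul_zero]
  rw [Measure.map_apply hmeas hs, hvol,
    sphericalMarginal_eq_lintegral_Ioi hn (measurable_one.indicator hs), hzero, lintegral_zero,
    mul_zero]

theorem sphericalMarginal_congr_ae (hn : n ≠ 0) (h : A =ᵐ[volume.restrict (Ioi u)] B) :
    sphericalMarginal n A u = sphericalMarginal n B u :=
  lintegral_congr_ae ((quasiMeasurePreserving_add_sum_sq hn u).ae h)

theorem ae_lt_top_of_sphericalMarginal_ne_top (hA : Measurable A) (hn : n ≠ 0)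
    (h : sphericalMarginal n A u ≠ ∞) : ∀ᵐ s ∂volume.restrict (Ioi u), A s < ∞ := by
  have hc : ENNReal.ofReal (√π ^ n / Gamma (n / 2)) ≠ 0 := by
    have := Gamma_pos_of_pos (s := n / 2) (by positivity)
    positivity
  rw [sphericalMarginal_eq_lintegral_Ioi hn hA] at h
  have hfin := ae_lt_top (by fun_prop) (ENNReal.lt_top_of_mul_ne_top_right h hc).ne
  filter_upwards [hfin, ae_restrict_mem measurableSet_Ioi] with s hs hus
  have hpos : 0 < (s - u) ^ ((n : ℝ) / 2 - 1) := rpow_pos_of_pos (sub_pos.2 hus) _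
  exact ENNReal.lt_top_of_mul_ne_top_right hs.ne (ENNReal.ofReal_pos.2 hpos).ne'

end SphericalMarginal

/-! ### Williamson transforms and Laplace transforms -/

/-- The Williamson transform of order `N` of a measure `μ` on `(0, ∞)`: the scale mixture of the
truncated powers `u ↦ (1 - u / r)₊ ^ N` with `r` distributed as `μ`. -/
noncomputable def williamsonTransform (N : ℕ) (μ : Measure ℝ) (u : ℝ) : ℝ :=
  ∫ r, max (1 - u / r) 0 ^ N ∂μ

section Williamson

variable {N : ℕ} {u r : ℝ} {w : ℝ → ℝ≥0∞}

theorem norm_max_one_sub_div_pow_le_one (hu : 0 ≤ u) (hr : 0 ≤ r) :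
    ‖max (1 - u / r) 0 ^ N‖ ≤ 1 := by
  have hle : max (1 - u / r) 0 ≤ 1 := max_le (sub_le_self _ (by positivity)) zero_le_one
  rw [norm_of_nonneg (by positivity)]
  exact pow_le_one₀ (le_max_right _ _) hle

theorem exp_neg_sub_max_le_sq {x : ℝ} (hx : 0 ≤ x) : exp (-x) - max (1 - x) 0 ≤ x ^ 2 := by
  rcases le_total x 1 with h | h
  · have hexp : |exp (-x) - 1 - -x| ≤ (-x) ^ 2 :=
      abs_exp_sub_one_sub_id_le (by rwa [abs_neg, abs_of_nonneg hx])
    linarith [neg_sq x, le_max_left (1 - x) 0, (abs_le.1 hexp).2]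
  · nlinarith [exp_le_one_iff.2 (neg_nonpos.2 hx), le_max_right (1 - x) 0]

theorem exp_neg_half_mul_sq_le {s : ℝ} (hs : 0 ≤ s) : exp (-(s / 2)) * s ^ 2 ≤ 8 := by
  have hquad := quadratic_le_exp_of_nonneg (x := s / 2) (by positivity)
  rw [exp_neg, inv_mul_le_iff₀ (exp_pos _)]
  nlinarith

theorem abs_max_one_sub_div_pow_sub_exp_neg_le (hN : 2 ≤ N) {s : ℝ} (hs : 0 ≤ s) :
    |max (1 - s / N) 0 ^ N - exp (-s)| ≤ 8 / N := by
  have hN' : (2 : ℝ) ≤ N := by exact_mod_cast hN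
  have hN0 : (0 : ℝ) < N := two_pos.trans_le hN'
  obtain ⟨x, rfl⟩ : ∃ x, s = N * x := ⟨s / N, by field_simp⟩
  have hx : 0 ≤ x := nonneg_of_mul_nonneg_right hs hN0
  rw [mul_div_cancel_left₀ _ hN0.ne']
  set a := max (1 - x) 0
  set b := exp (-x)
  have hab : a ≤ b := max_le (one_sub_le_exp_neg x) (exp_pos _).le
  have ha : 0 ≤ a := le_max_right _ _
  have hpow_nonneg : 0 ≤ b ^ N - a ^ N := sub_nonneg.2 (pow_le_pow_left₀ ha hab N)
  have hexp : exp (-(N * x)) = b ^ N := by rw [← exp_nat_mul, mul_neg]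
  have hdiff : b ^ N - a ^ N ≤ (b - a) * N * b ^ (N - 1) := by
    have hpow := abs_pow_sub_pow_le b a N
    rwa [abs_of_nonneg (sub_nonneg.2 hab), abs_of_pos (exp_pos _),
      abs_of_nonneg ha, max_eq_left hab, abs_of_nonneg hpow_nonneg] at hpow
  have hb : b ^ (N - 1) ≤ exp (-(N * x / 2)) := by
    rw [← exp_nat_mul, exp_le_exp, Nat.cast_pred (by omega)]
    nlinarith
  rw [hexp, abs_sub_comm, le_div_iff₀ hN0, abs_of_nonneg hpow_nonneg]
  calc (b ^ N - a ^ N) * N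
    _ ≤ ((b - a) * N * b ^ (N - 1)) * N := by gcongr
    _ ≤ (x ^ 2 * N * exp (-(N * x / 2))) * N := by
      gcongr
      exact exp_neg_sub_max_le_sq hx
    _ = exp (-(N * x / 2)) * (N * x) ^ 2 := by ring
    _ ≤ 8 := exp_neg_half_mul_sq_le hs

theorem lintegral_max_one_sub_div_pow_withDensity (hN : N ≠ 0) (hw : Measurable w) (hu : 0 ≤ u) :
    ∫⁻ r, ENNReal.ofReal (max (1 - u / r) 0 ^ N)
        ∂(volume.restrict (Ioi 0)).withDensity (fun r ↦ ENNReal.ofReal (r ^ N) * w r) =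
      ∫⁻ r in Ioi u, ENNReal.ofReal ((r - u) ^ N) * w r := by
  have hkernel : ∀ r ∈ Ioi (0 : ℝ),
      ENNReal.ofReal (r ^ N) * w r * ENNReal.ofReal (max (1 - u / r) 0 ^ N) =
        (Ioi u).indicator (fun r ↦ ENNReal.ofReal ((r - u) ^ N) * w r) r := by
    intro r (hr : 0 < r)
    have hmul : r ^ N * max (1 - u / r) 0 ^ N = max (r - u) 0 ^ N := by
      rw [← mul_pow, mul_max_of_nonneg _ _ hr.le, mul_one_sub, mul_div_cancel₀ _ hr.ne', mul_zero]
    rw [mul_right_comm, ← ENNReal.ofReal_mul (by positivity), hmul]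
    rcases lt_or_ge u r with hur | hur
    · rw [indicator_of_mem (mem_Ioi.2 hur), max_eq_left (sub_nonneg.2 hur.le)]
    · rw [indicator_of_notMem (notMem_Ioi.2 hur), max_eq_right (sub_nonpos.2 hur), zero_pow hN,
        ENNReal.ofReal_zero, zero_mul]
  rw [lintegral_withDensity_eq_lintegral_mul _ (by fun_prop) (by fun_prop)]
  simp only [Pi.mul_apply]
  rw [setLIntegral_congr_fun measurableSet_Ioi hkernel, setLIntegral_indicator measurableSet_Ioi,
    inter_eq_left.2 (Ioi_subset_Ioi hu)]

theorem exists_toReal_eq_williamsonTransform (hN : N ≠ 0) (hw : Measurable w) {G : ℝ → ℝ≥0∞}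
    (hG : ∀ u ≥ 0, G u = ∫⁻ r in Ioi u, ENNReal.ofReal ((r - u) ^ N) * w r) (hG0 : G 0 = 1) :
    ∃ μ : Measure ℝ, IsProbabilityMeasure μ ∧ (∀ᵐ r ∂μ, 0 < r) ∧
      ∀ u ≥ 0, (G u).toReal = williamsonTransform N μ u := by
  refine ⟨(volume.restrict (Ioi 0)).withDensity fun r ↦ ENNReal.ofReal (r ^ N) * w r, ⟨?_⟩,
    (withDensity_absolutelyContinuous _ _).ae_le (ae_restrict_mem measurableSet_Ioi),
    fun u hu ↦ ?_⟩
  · rw [← hG0, hG 0 le_rfl, withDensity_apply _ .univ, Measure.restrict_univ]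
    simp
  · rw [williamsonTransform, integral_eq_lintegral_of_nonneg_ae
      (.of_forall fun r ↦ pow_nonneg (le_max_right _ _) N)
      (Measurable.aestronglyMeasurable (by fun_prop)),
      lintegral_max_one_sub_div_pow_withDensity hN hw hu, hG u hu]

variable {μ : Measure ℝ} [IsProbabilityMeasure μ]

theorem abs_williamsonTransform_sub_integral_exp_neg_le (hN : 2 ≤ N) (hμ : ∀ᵐ r ∂μ, 0 < r)
    (hu : 0 ≤ u) :
    |williamsonTransform N μ u - ∫ r, exp (-(u * (N / r))) ∂μ| ≤ 8 / N := by
  have hN0 : (N : ℝ) ≠ 0 := by positivity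
  have hpow : Integrable (fun r ↦ max (1 - u / r) 0 ^ N) μ :=
    .of_bound (Measurable.aestronglyMeasurable (by fun_prop)) 1 <| by
      filter_upwards [hμ] with r hr using norm_max_one_sub_div_pow_le_one hu hr.le
  have hexp : Integrable (fun r ↦ exp (-(u * (N / r)))) μ :=
    .of_bound (Measurable.aestronglyMeasurable (by fun_prop)) 1 <| by
      filter_upwards [hμ] with r hr
      rw [norm_of_nonneg (exp_pos _).le, exp_le_one_iff, neg_nonpos]
      positivity
  have hkernel : ∀ᵐ r ∂μ, ‖max (1 - u / r) 0 ^ N - exp (-(u * (N / r)))‖ ≤ 8 / N := by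
    filter_upwards [hμ] with r hr
    have hdiv : u * (N / r) / N = u / r := by field_simp
    simpa only [hdiv, norm_eq_abs] using
      abs_max_one_sub_div_pow_sub_exp_neg_le hN (s := u * (N / r)) (by positivity)
  rw [williamsonTransform, ← integral_sub hpow hexp, ← norm_eq_abs]
  simpa using norm_integral_le_of_norm_le_const hkernel

theorem williamsonTransform_zero : williamsonTransform N μ 0 = 1 := by
  simp [williamsonTransform]

theorem tendsto_williamsonTransform {l : Filter ℝ} [l.IsCountablyGenerated] {c : ℝ}
    (hμ : ∀ᵐ r ∂μ, 0 < r) (hl : ∀ᶠ u in l, 0 ≤ u)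
    (h : ∀ r > 0, Tendsto (fun u ↦ max (1 - u / r) 0 ^ N) l (𝓝 c)) :
    Tendsto (williamsonTransform N μ) l (𝓝 c) := by
  have hlim := tendsto_integral_filter_of_dominated_convergence (μ := μ) (l := l)
    (F := fun u r ↦ max (1 - u / r) 0 ^ N) (f := fun _ ↦ c) (fun _ ↦ 1)
    (.of_forall fun u ↦ Measurable.aestronglyMeasurable (by fun_prop)) ?_ (integrable_const 1) ?_
  · simp only [integral_const, probReal_univ, one_smul] at hlim
    exact hlim
  · filter_upwards [hl] with u hu
    filter_upwards [hμ] with r hr using norm_max_one_sub_div_pow_le_one hu hr.le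
  · filter_upwards [hμ] with r hr using h r hr

theorem tendsto_williamsonTransform_nhdsGT_zero (hμ : ∀ᵐ r ∂μ, 0 < r) :
    Tendsto (williamsonTransform N μ) (𝓝[>] 0) (𝓝 1) := by
  refine tendsto_williamsonTransform hμ ?_ fun r _ ↦ ?_
  · filter_upwards [self_mem_nhdsWithin] with u hu using le_of_lt hu
  · have hcont : Continuous fun u ↦ max (1 - u / r) 0 ^ N := by fun_prop
    simpa using (hcont.tendsto 0).mono_left nhdsWithin_le_nhds

theorem tendsto_williamsonTransform_atTop (hN : N ≠ 0) (hμ : ∀ᵐ r ∂μ, 0 < r) :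
    Tendsto (williamsonTransform N μ) atTop (𝓝 0) := by
  refine tendsto_williamsonTransform hμ (eventually_ge_atTop 0) fun r hr ↦ ?_
  refine tendsto_const_nhds.congr' ?_
  filter_upwards [eventually_ge_atTop r] with u hu
  rw [max_eq_right (sub_nonpos.2 ((one_le_div hr).2 hu)), zero_pow hN]

end Williamson

section UnitInterval

theorem exists_integral_rpow_eq_integral_exp_neg {Ω : Type*} [MeasurableSpace Ω] {μ : Measure Ω}
    [IsProbabilityMeasure μ] {X : Ω → ℝ} (hX : Measurable X) (hX0 : ∀ᵐ ω ∂μ, 0 ≤ X ω) :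
    ∃ ρ : ProbabilityMeasure unitInterval, ∀ u : ℝ,
      ∫ x, (x : ℝ) ^ u ∂(ρ : Measure unitInterval) = ∫ ω, exp (-(u * X ω)) ∂μ := by
  let Y : Ω → unitInterval := fun ω ↦ ⟨exp (-|X ω|), (exp_pos _).le, exp_le_one_iff.2 (by simp)⟩
  have hY : Measurable Y := Measurable.subtype_mk (by fun_prop)
  refine ⟨⟨μ.map Y, Measure.isProbabilityMeasure_map hY.aemeasurable⟩, fun u ↦ ?_⟩
  rw [ProbabilityMeasure.coe_mk,
    integral_map hY.aemeasurable (Measurable.aestronglyMeasurable (by fun_prop))]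
  refine integral_congr_ae ?_
  filter_upwards [hX0] with ω hω
  simp only [Y]
  rw [abs_of_nonneg hω, ← exp_mul, neg_mul, mul_comm]

theorem exists_integral_exp_neg_eq_integral_rpow {ρ : Measure unitInterval} [IsProbabilityMeasure ρ]
    (h0 : ∀ᵐ x ∂ρ, x ≠ 0) (h1 : ∀ᵐ x ∂ρ, x ≠ 1) :
    ∃ ν : Measure ℝ, IsProbabilityMeasure ν ∧ (∀ᵐ ξ ∂ν, 0 < ξ) ∧
      ∀ u, ∫ ξ, exp (-(u * ξ)) ∂ν = ∫ x, (x : ℝ) ^ u ∂ρ := by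
  have hlog : Measurable fun x : unitInterval ↦ -log x := by fun_prop
  refine ⟨ρ.map fun x : unitInterval ↦ -log x,
    Measure.isProbabilityMeasure_map hlog.aemeasurable, ?_, fun u ↦ ?_⟩
  · rw [ae_map_iff hlog.aemeasurable measurableSet_Ioi]
    filter_upwards [h0, h1] with x hx0 hx1
    exact neg_pos.2 (log_neg (unitInterval.pos_iff_ne_zero.2 hx0)
      (unitInterval.lt_one_iff_ne_one.2 hx1))
  · rw [integral_map hlog.aemeasurable (Measurable.aestronglyMeasurable (by fun_prop))]
    refine integral_congr_ae ?_
    filter_upwards [h0] with x hx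
    rw [rpow_def_of_pos (unitInterval.pos_iff_ne_zero.2 hx), mul_neg, neg_neg, mul_comm]

theorem exists_integral_eq_of_tendsto_integral {E : Type*} [TopologicalSpace E]
    [CompactSpace E] [T2Space E] [MeasurableSpace E] [BorelSpace E]
    {ι : Type*} (l : Filter ι) [l.NeBot] (ρ : ι → ProbabilityMeasure E) :
    ∃ σ : ProbabilityMeasure E, ∀ (F : C(E, ℝ)) (c : ℝ),
      Tendsto (fun i ↦ ∫ x, F x ∂(ρ i : Measure E)) l (𝓝 c) → ∫ x, F x ∂(σ : Measure E) = c := by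
  obtain ⟨σ, -, hσ⟩ := isCompact_univ.ultrafilter_le_nhds ((Ultrafilter.of l).map ρ) (by simp)
  refine ⟨σ, fun F c hF ↦ ?_⟩
  have hlim := ProbabilityMeasure.tendsto_iff_forall_integral_tendsto.1 (show Tendsto ρ _ _ from hσ)
    (BoundedContinuousFunction.mkOfCompact F)
  exact tendsto_nhds_unique hlim (hF.mono_left (Ultrafilter.of_le l))

variable (ρ : Measure unitInterval) [IsFiniteMeasure ρ]

theorem tendsto_integral_rpow {l : Filter ℝ} [l.IsCountablyGenerated] {s : Set unitInterval}
    (hs : MeasurableSet s) (hl : ∀ᶠ u in l, 0 ≤ u)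
    (h : ∀ x : unitInterval, Tendsto (fun u ↦ (x : ℝ) ^ u) l (𝓝 (s.indicator 1 x))) :
    Tendsto (fun u : ℝ ↦ ∫ x, (x : ℝ) ^ u ∂ρ) l (𝓝 (ρ.real s)) := by
  rw [← integral_indicator_one hs]
  refine tendsto_integral_filter_of_dominated_convergence (fun _ ↦ 1)
    (.of_forall fun u ↦ Measurable.aestronglyMeasurable (by fun_prop)) ?_ (integrable_const 1)
    (.of_forall h)
  filter_upwards [hl] with u hu
  refine .of_forall fun x ↦ ?_
  rw [norm_of_nonneg (rpow_nonneg x.2.1 u)]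
  exact rpow_le_one x.2.1 x.2.2 hu

theorem tendsto_integral_rpow_nhdsGT_zero :
    Tendsto (fun u : ℝ ↦ ∫ x, (x : ℝ) ^ u ∂ρ) (𝓝[>] 0) (𝓝 (ρ.real {0}ᶜ)) := by
  have hpos : ∀ᶠ u : ℝ in 𝓝[>] 0, 0 < u := self_mem_nhdsWithin
  refine tendsto_integral_rpow ρ (measurableSet_singleton _).compl (hpos.mono fun _ ↦ le_of_lt)
    fun x ↦ ?_
  rcases eq_or_ne x 0 with rfl | hx
  · refine tendsto_const_nhds.congr' ?_
    filter_upwards [hpos] with u hu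
    simp [zero_rpow hu.ne']
  · have hcont := (continuous_const_rpow (unitInterval.coe_ne_zero.2 hx)).tendsto 0
    simpa [hx] using hcont.mono_left nhdsWithin_le_nhds

theorem tendsto_integral_rpow_atTop :
    Tendsto (fun u : ℝ ↦ ∫ x, (x : ℝ) ^ u ∂ρ) atTop (𝓝 (ρ.real {1})) := by
  refine tendsto_integral_rpow ρ (measurableSet_singleton _) (eventually_ge_atTop 0) fun x ↦ ?_
  rcases eq_or_ne x 1 with rfl | hx
  · simp
  · simpa [hx] using tendsto_rpow_atTop_of_base_lt_one x (neg_one_lt_zero.trans_le x.2.1)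
      (unitInterval.lt_one_iff_ne_one.2 hx)

end UnitInterval

theorem exists_integral_rpow_eq_of_williamsonTransform {G : ℝ → ℝ}
    (hG : ∀ N ≠ 0, ∃ μ : Measure ℝ, IsProbabilityMeasure μ ∧ (∀ᵐ r ∂μ, 0 < r) ∧
      ∀ u ≥ 0, G u = williamsonTransform N μ u) :
    ∃ ρ : ProbabilityMeasure unitInterval,
      ∀ u > 0, ∫ x, (x : ℝ) ^ u ∂(ρ : Measure unitInterval) = G u := by
  have happrox (N : ℕ) : ∃ ρ : ProbabilityMeasure unitInterval, ∀ u ≥ 0,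
      dist (∫ x, (x : ℝ) ^ u ∂(ρ : Measure unitInterval)) (G u) ≤ 8 / (N + 2 : ℕ) := by
    obtain ⟨μ, _, hμ, hGμ⟩ := hG (N + 2) (by omega)
    obtain ⟨ρ, hρ⟩ := exists_integral_rpow_eq_integral_exp_neg (μ := μ)
      (X := fun r ↦ (N + 2 : ℕ) / r) (by fun_prop)
      (by filter_upwards [hμ] with r hr; positivity)
    refine ⟨ρ, fun u hu ↦ ?_⟩
    rw [hρ, hGμ u hu, dist_comm]
    exact abs_williamsonTransform_sub_integral_exp_neg_le (by omega) hμ hu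
  choose ρ hρ using happrox
  obtain ⟨σ, hσ⟩ := exists_integral_eq_of_tendsto_integral atTop ρ
  refine ⟨σ, fun u hu ↦ hσ
    ⟨fun x ↦ (x : ℝ) ^ u, continuous_subtype_val.rpow_const fun _ ↦ .inr hu.le⟩ _ ?_⟩
  refine tendsto_iff_dist_tendsto_zero.2 (squeeze_zero (fun _ ↦ dist_nonneg)
    (fun N ↦ hρ N u hu.le) ?_)
  exact (tendsto_const_div_atTop_nhds_zero_nat (8 : ℝ)).comp (tendsto_add_atTop_nat 2)

theorem exists_integral_exp_neg_eq_of_williamsonTransform {G : ℝ → ℝ}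
    (hG : ∀ N ≠ 0, ∃ μ : Measure ℝ, IsProbabilityMeasure μ ∧ (∀ᵐ r ∂μ, 0 < r) ∧
      ∀ u ≥ 0, G u = williamsonTransform N μ u) :
    ∃ ν : Measure ℝ, IsProbabilityMeasure ν ∧ (∀ᵐ ξ ∂ν, 0 < ξ) ∧
      ∀ u ≥ 0, G u = ∫ ξ, exp (-(u * ξ)) ∂ν := by
  obtain ⟨ρ, hρ⟩ := exists_integral_rpow_eq_of_williamsonTransform hG
  obtain ⟨μ, _, hμ, hGμ⟩ := hG 1 one_ne_zero
  have hzero : (ρ : Measure unitInterval) {0} = 0 := by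
    rw [← prob_compl_eq_one_iff (measurableSet_singleton _), ← ENNReal.toReal_eq_one_iff]
    refine tendsto_nhds_unique (tendsto_integral_rpow_nhdsGT_zero (ρ : Measure unitInterval)) ?_
    refine (tendsto_williamsonTransform_nhdsGT_zero (N := 1) hμ).congr' ?_
    filter_upwards [self_mem_nhdsWithin] with u hu
    rw [hρ u hu, hGμ u (le_of_lt hu)]
  have hone : (ρ : Measure unitInterval) {1} = 0 := by
    rw [← measureReal_eq_zero_iff]
    refine tendsto_nhds_unique (tendsto_integral_rpow_atTop _) ?_
    refine (tendsto_williamsonTransform_atTop one_ne_zero hμ).congr' ?_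
    filter_upwards [eventually_gt_atTop 0] with u hu
    rw [hρ u hu, hGμ u hu.le]
  obtain ⟨ν, hν, hν0, hνρ⟩ := exists_integral_exp_neg_eq_integral_rpow
    (ρ := (ρ : Measure unitInterval))
    (measure_eq_zero_iff_ae_notMem.1 hzero) (measure_eq_zero_iff_ae_notMem.1 hone)
  refine ⟨ν, hν, hν0, fun u hu ↦ ?_⟩
  rcases hu.eq_or_lt with rfl | hu
  · simp [hGμ 0 le_rfl, williamsonTransform_zero]
  · rw [hνρ, hρ u hu]

/-! ### Consistent families -/

theorem ae_eq_of_lintegral_Ioi_eq {A B : ℝ → ℝ≥0∞} {u : ℝ} (hA : Measurable A)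
    (hB : Measurable B) (hfin : ∫⁻ s in Ioi u, A s ≠ ∞)
    (h : ∀ v ≥ u, ∫⁻ s in Ioi v, A s = ∫⁻ s in Ioi v, B s) :
    A =ᵐ[volume.restrict (Ioi u)] B := by
  rw [← withDensity_eq_iff hA.aemeasurable hB.aemeasurable hfin]
  have : IsFiniteMeasure ((volume.restrict (Ioi u)).withDensity A) :=
    isFiniteMeasure_withDensity hfin
  refine Measure.ext_of_Ici _ _ fun v ↦ ?_
  rw [withDensity_apply _ measurableSet_Ici, withDensity_apply _ measurableSet_Ici,
    restrict_Ioi_eq_restrict_Ici, Measure.restrict_restrict measurableSet_Ici, Ici_inter_Ici,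
    ← restrict_Ioi_eq_restrict_Ici]
  exact h _ le_sup_right

/-- A family of density generators with values in `[0, ∞]`, indexed from dimension `0`: the
`k`-dimensional spherical density `y ↦ g k (‖y‖²)` is obtained from the `(k + 1)`-dimensional one
by integrating out a coordinate. -/
structure IsConsistentFamily (g : ℕ → ℝ → ℝ≥0∞) : Prop where
  measurable : ∀ k, Measurable (g k)
  sphericalMarginal_one : ∀ k, ∀ u ≥ 0, sphericalMarginal 1 (g (k + 1)) u = g k u

namespace IsConsistentFamily

variable {g h : ℕ → ℝ → ℝ≥0∞} {u : ℝ}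

theorem sphericalMarginal_add (hg : IsConsistentFamily g) (k n : ℕ) (hu : 0 ≤ u) :
    sphericalMarginal n (g (k + n)) u = g k u := by
  induction n with
  | zero => exact sphericalMarginal_zero
  | succ n ih =>
    rw [sphericalMarginal_succ (hg.measurable _), ← ih]
    exact lintegral_congr fun y ↦ hg.sphericalMarginal_one (k + n) _ (by positivity)

theorem eq_lintegral_Ioi (hg : IsConsistentFamily g) (k : ℕ) (hu : 0 ≤ u) :
    g k u = ENNReal.ofReal π * ∫⁻ s in Ioi u, g (k + 2) s := by
  rw [← hg.sphericalMarginal_add k 2 hu, sphericalMarginal_two (hg.measurable _)]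

theorem antitoneOn (hg : IsConsistentFamily g) (k : ℕ) : AntitoneOn (g k) (Ici 0) := by
  intro u hu v hv huv
  rw [hg.eq_lintegral_Ioi k hu, hg.eq_lintegral_Ioi k hv]
  gcongr

theorem ne_top (hg : IsConsistentFamily g) (h0 : g 0 0 ≠ ∞) (k : ℕ) (hu : 0 < u) :
    g k u ≠ ∞ := by
  rcases eq_or_ne k 0 with rfl | hk
  · exact ne_top_of_le_ne_top h0 (hg.antitoneOn 0 self_mem_Ici hu.le hu.le)
  have hfin : ∀ᵐ s ∂volume.restrict (Ioi 0), g k s < ∞ := by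
    refine ae_lt_top_of_sphericalMarginal_ne_top (hg.measurable k) hk ?_
    simpa using (hg.sphericalMarginal_add 0 k le_rfl).trans_ne h0
  have : (ae (volume.restrict (Ioo 0 u))).NeBot := ae_restrict_neBot.2 (by simp [hu])
  obtain ⟨s, hs, hs0, hsu⟩ := ((ae_restrict_of_ae_restrict_of_subset
    (Ioo_subset_Ioi_self : Ioo 0 u ⊆ Ioi 0) hfin).and (ae_restrict_mem measurableSet_Ioo)).exists
  exact ne_top_of_le_ne_top hs.ne (hg.antitoneOn k hs0.le hu.le hsu.le)

theorem eq_of_zero_eq (hg : IsConsistentFamily g) (hh : IsConsistentFamily h) (h0 : g 0 0 ≠ ∞)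
    (heq : ∀ v > 0, g 0 v = h 0 v) (k : ℕ) (hu : 0 < u) : g k u = h k u := by
  induction k generalizing u with
  | zero => exact heq u hu
  | succ k ih =>
    have hpi : ENNReal.ofReal π ≠ 0 := (ENNReal.ofReal_pos.2 pi_pos).ne'
    have hfin : ∫⁻ s in Ioi u, g (k + 2) s ≠ ∞ := by
      refine (ENNReal.lt_top_of_mul_ne_top_right ?_ hpi).ne
      rw [← hg.eq_lintegral_Ioi k hu.le]
      exact hg.ne_top h0 k hu
    have hae : g (k + 2) =ᵐ[volume.restrict (Ioi u)] h (k + 2) := by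
      refine ae_eq_of_lintegral_Ioi_eq (hg.measurable _) (hh.measurable _) hfin fun v hv ↦ ?_
      have hv : 0 < v := hu.trans_le hv
      rw [← ENNReal.mul_right_inj hpi ENNReal.ofReal_ne_top, ← hg.eq_lintegral_Ioi k hv.le,
        ← hh.eq_lintegral_Ioi k hv.le, ih hv]
    rw [← hg.sphericalMarginal_one _ u hu.le, ← hh.sphericalMarginal_one _ u hu.le]
    exact sphericalMarginal_congr_ae one_ne_zero hae

theorem exists_toReal_zero_eq_williamsonTransform (hg : IsConsistentFamily g) (h0 : g 0 0 = 1)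
    {N : ℕ} (hN : N ≠ 0) :
    ∃ μ : Measure ℝ, IsProbabilityMeasure μ ∧ (∀ᵐ r ∂μ, 0 < r) ∧
      ∀ u ≥ 0, (g 0 u).toReal = williamsonTransform N μ u := by
  have hgm : Measurable (g (2 * N + 2)) := hg.measurable _
  refine exists_toReal_eq_williamsonTransform hN (w := fun r ↦ ENNReal.ofReal
    (√π ^ (2 * N + 2) / Gamma ((2 * N + 2 : ℕ) / 2)) * g (2 * N + 2) r) (hgm.const_mul _)
    (fun u hu ↦ ?_) h0
  have hexponent : ((2 * N + 2 : ℕ) : ℝ) / 2 - 1 = N := by push_cast; ring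
  rw [← hg.sphericalMarginal_add 0 (2 * N + 2) hu, zero_add,
    sphericalMarginal_eq_lintegral_Ioi (by omega) hgm, ← lintegral_const_mul _ (by fun_prop)]
  simp only [hexponent, rpow_natCast, mul_left_comm]

end IsConsistentFamily

/-! ### Gaussian mixtures -/

/-- The mixture of the `k`-dimensional centred Gaussian density generators of precision `ξ`, with
`ξ` distributed as `ν`. -/
noncomputable def gaussianMixture (ν : Measure ℝ) (k : ℕ) (u : ℝ) : ℝ≥0∞ :=
  ∫⁻ ξ, ENNReal.ofReal ((ξ / (2 * π)) ^ ((k : ℝ) / 2) * exp (-u * ξ / 2)) ∂ν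

theorem lintegral_gaussianGenerator_succ (k : ℕ) (u : ℝ) {ξ : ℝ} (hξ : 0 < ξ) :
    ∫⁻ t : ℝ, ENNReal.ofReal
        ((ξ / (2 * π)) ^ (((k + 1 : ℕ) : ℝ) / 2) * exp (-(u + t ^ 2) * ξ / 2)) =
      ENNReal.ofReal ((ξ / (2 * π)) ^ ((k : ℝ) / 2) * exp (-u * ξ / 2)) := by
  have hq : 0 < ξ / (2 * π) := by positivity
  have hpow : (ξ / (2 * π)) ^ (((k + 1 : ℕ) : ℝ) / 2) =
      (ξ / (2 * π)) ^ ((k : ℝ) / 2) * √(ξ / (2 * π)) := by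
    rw [Nat.cast_succ, add_div, rpow_add hq, sqrt_eq_rpow]
  have hexp (t : ℝ) : exp (-(u + t ^ 2) * ξ / 2) = exp (-u * ξ / 2) * exp (-(ξ / 2) * t ^ 2) := by
    rw [← exp_add]
    ring_nf
  have hgauss : √(ξ / (2 * π)) * ∫ t, exp (-(ξ / 2) * t ^ 2) = 1 := by
    rw [integral_gaussian, ← sqrt_mul hq.le, show ξ / (2 * π) * (π / (ξ / 2)) = 1 by field_simp,
      sqrt_one]
  simp only [hpow, hexp]
  rw [← ofReal_integral_eq_lintegral_ofReal
    (((integrable_exp_neg_mul_sq (half_pos hξ)).const_mul _).const_mul _)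
    (.of_forall fun t ↦ by positivity), integral_const_mul, integral_const_mul]
  congr 1
  linear_combination (ξ / (2 * π)) ^ ((k : ℝ) / 2) * exp (-u * ξ / 2) * hgauss

theorem isConsistentFamily_gaussianMixture {ν : Measure ℝ} [SFinite ν] (hν : ∀ᵐ ξ ∂ν, 0 < ξ) :
    IsConsistentFamily (gaussianMixture ν) where
  measurable k := Measurable.lintegral_prod_right' (f := fun p : ℝ × ℝ ↦
    ENNReal.ofReal ((p.2 / (2 * π)) ^ ((k : ℝ) / 2) * exp (-p.1 * p.2 / 2))) (by fun_prop)
  sphericalMarginal_one k u _ := by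
    simp only [sphericalMarginal_one, gaussianMixture]
    rw [lintegral_lintegral_swap (Measurable.aemeasurable (by fun_prop))]
    refine lintegral_congr_ae ?_
    filter_upwards [hν] with ξ hξ using lintegral_gaussianGenerator_succ k u hξ

theorem toReal_gaussianMixture {ν : Measure ℝ} (hν : ∀ᵐ ξ ∂ν, 0 < ξ) (k : ℕ) (u : ℝ) :
    (gaussianMixture ν k u).toReal =
      ∫ ξ, (ξ / (2 * π)) ^ ((k : ℝ) / 2) * exp (-u * ξ / 2) ∂ν := by
  refine (integral_eq_lintegral_of_nonneg_ae ?_ (Measurable.aestronglyMeasurable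
    (by fun_prop))).symm
  filter_upwards [hν] with ξ hξ
  simp only [Pi.zero_apply]
  positivity

theorem IsConsistentFamily.exists_eq_gaussianMixture {g : ℕ → ℝ → ℝ≥0∞}
    (hg : IsConsistentFamily g) (h0 : g 0 0 = 1) :
    ∃ ν : Measure ℝ, IsProbabilityMeasure ν ∧ (∀ᵐ ξ ∂ν, 0 < ξ) ∧
      ∀ k, ∀ u > 0, g k u = gaussianMixture ν k u := by
  obtain ⟨μ, _, hμ, hgμ⟩ := exists_integral_exp_neg_eq_of_williamsonTransform
    fun N hN ↦ hg.exists_toReal_zero_eq_williamsonTransform h0 hN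
  have hdouble : Measurable fun ξ : ℝ ↦ 2 * ξ := by fun_prop
  have hprob := Measure.isProbabilityMeasure_map (μ := μ) hdouble.aemeasurable
  have hpos : ∀ᵐ ξ ∂μ.map (2 * ·), 0 < ξ := by
    rw [ae_map_iff hdouble.aemeasurable measurableSet_Ioi]
    filter_upwards [hμ] with ξ hξ using mul_pos two_pos hξ
  have hne : g 0 0 ≠ ∞ := by simp [h0]
  have hmix := isConsistentFamily_gaussianMixture hpos
  have hzero : ∀ u ≥ 0, (g 0 u).toReal = (gaussianMixture (μ.map (2 * ·)) 0 u).toReal := by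
    intro u hu
    rw [toReal_gaussianMixture hpos, integral_map hdouble.aemeasurable
      (Measurable.aestronglyMeasurable (by fun_prop)), hgμ u hu]
    congr! 2 with ξ
    simp
    ring
  refine ⟨μ.map (2 * ·), hprob, hpos, fun k u hu ↦
    hg.eq_of_zero_eq hmix hne (fun v hv ↦ ?_) k hu⟩
  refine (ENNReal.toReal_eq_toReal_iff' (hg.ne_top hne 0 hv) (hmix.ne_top ?_ 0 hv)).1
    (hzero v hv.le)
  simp [gaussianMixture]

/-! ### Real-valued generators -/

section RealValued

theorem isConsistentFamily_sphericalMarginal_one {F : ℕ → ℝ → ℝ≥0∞}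
    (hF : ∀ k, Measurable (F (k + 1)))
    (h : ∀ k, sphericalMarginal 1 (F (k + 2)) =ᵐ[volume.restrict (Ioi 0)] F (k + 1)) :
    IsConsistentFamily fun k ↦ sphericalMarginal 1 (F (k + 1)) where
  measurable k := measurable_sphericalMarginal (hF k)
  sphericalMarginal_one k _ hu := sphericalMarginal_congr_ae one_ne_zero
    (ae_restrict_of_ae_restrict_of_subset (Ioi_subset_Ioi hu) (h k))

variable {f : ℝ → ℝ} {n : ℕ} {u : ℝ}

theorem toReal_sphericalMarginal_ofReal (hn : n ≠ 0) (hf : Measurable f)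
    (hf0 : 0 ≤ᵐ[volume.restrict (Ioi u)] f) :
    (sphericalMarginal n (fun s ↦ ENNReal.ofReal (f s)) u).toReal =
      ∫ y : Fin n → ℝ, f (u + ∑ i, y i ^ 2) :=
  (integral_eq_lintegral_of_nonneg_ae ((quasiMeasurePreserving_add_sum_sq hn u).ae hf0)
    (Measurable.aestronglyMeasurable (by fun_prop))).symm

theorem integral_fin_one_sum_sq (f : ℝ → ℝ) :
    ∫ y : Fin 1 → ℝ, f (∑ i, y i ^ 2) = ∫ t : ℝ, f (t ^ 2) := by
  simp only [Finset.univ_unique, Finset.sum_singleton]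
  exact (volume_preserving_funUnique (Fin 1) ℝ).integral_comp
    (MeasurableEquiv.measurableEmbedding _) fun t ↦ f (t ^ 2)

theorem sphericalMarginal_one_ofReal_ae_eq {f₁ f₂ : ℝ → ℝ} (hn : n ≠ 0) (hf : Measurable f₂)
    (hf0 : 0 ≤ᵐ[volume.restrict (Ioi 0)] f₂)
    (hfin : sphericalMarginal (n + 1) (fun s ↦ ENNReal.ofReal (f₂ s)) 0 ≠ ∞)
    (h : ∀ᵐ u ∂volume.restrict (Ioi 0), ∫ t : ℝ, f₂ (u + t ^ 2) = f₁ u) :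
    sphericalMarginal 1 (fun s ↦ ENNReal.ofReal (f₂ s)) =ᵐ[volume.restrict (Ioi 0)]
      fun u ↦ ENNReal.ofReal (f₁ u) := by
  rw [sphericalMarginal_succ hf.ennreal_ofReal] at hfin
  filter_upwards [h, ae_restrict_mem measurableSet_Ioi, ae_lt_top_of_sphericalMarginal_ne_top
    (measurable_sphericalMarginal hf.ennreal_ofReal) hn hfin] with u hu hu0 htop
  have hf0 : 0 ≤ᵐ[volume.restrict (Ioi u)] f₂ :=
    ae_restrict_of_ae_restrict_of_subset (Ioi_subset_Ioi (le_of_lt hu0)) hf0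
  rw [← hu, ← integral_fin_one_sum_sq fun s ↦ f₂ (u + s),
    ← toReal_sphericalMarginal_ofReal one_ne_zero hf hf0, ENNReal.ofReal_toReal htop.ne]

end RealValued

theorem kano_converse_general
    (f : ℕ → ℝ → ℝ) (hf_meas : ∀ n ≥ 1, Measurable (f n))
    (hf_nonneg : ∀ n ≥ 1, ∀ᵐ u ∂volume.restrict (Ici 0), 0 ≤ f n u)
    (hf_prob : ∀ n ≥ 1, ∫ y : Fin n → ℝ, f n (∑ i, y i ^ 2) = 1)
    (hf_consistent : ∀ n ≥ 1, ∀ᵐ u ∂volume.restrict (Ici 0),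
      ∫ t : ℝ, f (n + 1) (u + t ^ 2) = f n u) :
    ∃ ν : Measure ℝ, IsProbabilityMeasure ν ∧ ν (Iic 0) = 0 ∧
      ∀ n ≥ 1, ∀ᵐ u ∂volume.restrict (Ici 0),
        f n u = ∫ ξ, (ξ / (2 * π)) ^ ((n : ℝ) / 2) * exp (-u * ξ / 2) ∂ν := by
  simp only [← restrict_Ioi_eq_restrict_Ici] at *
  let F : ℕ → ℝ → ℝ≥0∞ := fun n s ↦ ENNReal.ofReal (f n s)
  have hF_prob (n : ℕ) (hn : n ≥ 1) : sphericalMarginal n (F n) 0 = 1 := by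
    rw [← ENNReal.toReal_eq_one_iff, ← hf_prob n hn,
      toReal_sphericalMarginal_ofReal (by omega) (hf_meas n hn) (hf_nonneg n hn)]
    simp only [zero_add]
  have hF_consistent (n : ℕ) (hn : n ≥ 1) :
      sphericalMarginal 1 (F (n + 1)) =ᵐ[volume.restrict (Ioi 0)] F n :=
    sphericalMarginal_one_ofReal_ae_eq (Nat.one_le_iff_ne_zero.1 hn) (hf_meas _ (by omega))
      (hf_nonneg _ (by omega)) ((hF_prob _ (by omega)).trans_ne ENNReal.one_ne_top)
      (hf_consistent n hn)
  have hg := isConsistentFamily_sphericalMarginal_one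
    (fun k ↦ (hf_meas (k + 1) (by omega)).ennreal_ofReal) fun k ↦ hF_consistent (k + 1) (by omega)
  obtain ⟨ν, hν, hν0, hgν⟩ := hg.exists_eq_gaussianMixture (hF_prob 1 le_rfl)
  refine ⟨ν, hν, by simpa [ae_iff, Iic] using hν0, fun n hn ↦ ?_⟩
  filter_upwards [hF_consistent n hn, hf_nonneg n hn, ae_restrict_mem measurableSet_Ioi]
    with u hFu hfu hu
  rw [← toReal_gaussianMixture hν0, ← hgν n u hu, hFu, ENNReal.toReal_ofReal hfu]

/-- Kano's characterization, converse direction: a consistent family of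
density generators arises from a mixing distribution, i.e. there is a probability
measure `ν` supported on `(0,∞)` such that for every `n ≥ 1` and Lebesgue-a.e. `u ≥ 0`,
`f n u = ∫ (ξ/(2π))^{n/2} e^{-uξ/2} dν(ξ)`. -/
theorem kano_converse
    (f : ℕ → ℝ → ℝ) (hf_meas : ∀ n, Measurable (f n))
    (hf_nonneg : ∀ n, ∀ u ≥ (0 : ℝ), 0 ≤ f n u)
    (hf_prob : ∀ n ≥ 1, ∫ y : Fin n → ℝ, f n (∑ i, y i ^ 2) = 1)
    (hf_consistent : ∀ n ≥ 1, ∀ u ≥ (0 : ℝ),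
      (∫ t : ℝ, f (n + 1) (u + t ^ 2)) = f n u) :
    ∃ ν : Measure ℝ, IsProbabilityMeasure ν ∧ ν (Set.Iic 0) = 0 ∧
      ∀ n ≥ 1, ∀ᵐ u ∂(volume.restrict (Set.Ici (0 : ℝ))),
        f n u = ∫ ξ, (ξ / (2 * π)) ^ ((n : ℝ) / 2) * Real.exp (-u * ξ / 2) ∂ν :=
  kano_converse_general f (fun n _ ↦ hf_meas n)
    (fun n _ ↦ ae_restrict_of_forall_mem measurableSet_Ici (hf_nonneg n)) hf_prob
    fun n hn ↦ ae_restrict_of_forall_mem measurableSet_Ici (hf_consistent n hn)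
end

section
/- (Proposition 1, conditional covariance.) With the notation of Proposition 1, assume additionally that ∫_0^∞ ξ^{n1/2 - 1} e^{-u1 ξ/2} p(ξ) dξ < ∞. Then ∫_{ℝ^{n2}} (y2 - μ_{2|1})(y2 - μ_{2|1})ᵀ · [c |Σ_{22|1}|^{-1/2} (2π)^{-n2/2} ∫_0^∞ ξ^{n/2} e^{-(u_{2|1}(y1,y2) + u1)ξ/2} p(ξ) dξ] dy2 = [ (∫_0^∞ ξ^{n1/2 - 1} e^{-u1 ξ/2} p(ξ) dξ) / (∫_0^∞ ξ^{n1/2} e^{-u1 ξ/2} p(ξ) dξ) ] · Σ_{22|1}, where c⁻¹ = ∫_0^∞ ξ^{n1/2} e^{-ξ u1/2} p(ξ) dξ; i.e., Cov(y2 | y1) = E[ξ̂⁻¹] Σ_{22|1} where ξ̂ has density p(ξ | y1) ∝ ξ^{n1/2} e^{-ξ u1/2} p(ξ). -/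
open MeasureTheory Matrix Real

/-!
After the substitution `y ↦ √ξ • y`, each component of the scale mixture contributes the same
Gaussian second moment `∫ yᵢ yⱼ exp (-yᵀ A⁻¹ y / 2)`, at the cost of one factor `ξ⁻¹` because
`yᵢ yⱼ` is homogeneous of degree two. By Fubini the mixed second moment is therefore the Gaussian
one times the mixing integral with its exponent lowered by one. The Gaussian moment itself reduces,
through a factorisation `A = B Bᵀ` and the substitution `y = B z`, to moments of independent
standard normal variables.
-/

open scoped ComplexOrder in
lemma posDef_schur_complement₁₁ {𝕜 m n : Type*} [RCLike 𝕜] [Fintype m] [Finite n] [DecidableEq m]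
    {A : Matrix m m 𝕜} {B : Matrix m n 𝕜} {D : Matrix n n 𝕜}
    (h : (fromBlocks A B Bᴴ D).PosDef) : (D - Bᴴ * A⁻¹ * B).PosDef := by
  classical
  cases nonempty_fintype n
  have hA : A.PosDef := h.submatrix Sum.inl_injective
  let := hA.isUnit.invertible
  have hpsd : (D - Bᴴ * A⁻¹ * B).PosSemidef := (PosDef.fromBlocks₁₁ B D hA).1 h.posSemidef
  rw [hpsd.posDef_iff_isUnit, ← invOf_eq_nonsing_inv, ← isUnit_fromBlocks_iff_of_invertible₁₁]
  exact h.isUnit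

section ScaleMixture

variable {E X : Type*} [NormedAddCommGroup E] [NormedSpace ℝ E] [FiniteDimensional ℝ E]
  [MeasurableSpace E] [BorelSpace E] {μ : Measure E} [μ.IsAddHaarMeasure]
  [MeasurableSpace X] {ν : Measure X} {φ : E → ℝ} {r g : X → ℝ}

lemma pow_finrank_smul_integral_comp_smul {F : Type*} [NormedAddCommGroup F] [NormedSpace ℝ F]
    (φ : E → F) {c : ℝ} (hc : 0 < c) :
    c ^ Module.finrank ℝ E • ∫ y, φ (c • y) ∂μ = ∫ y, φ y ∂μ := by
  rw [Measure.integral_comp_smul_of_nonneg μ φ c (hR := hc.le),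
    smul_inv_smul₀ (pow_ne_zero _ hc.ne')]

lemma integral_scale_mixture_kernel (φ : E → ℝ) {c : ℝ} (hc : 0 < c) (a : ℝ) :
    ∫ y, c ^ Module.finrank ℝ E * φ (c • y) * a ∂μ = (∫ y, φ y ∂μ) * a := by
  rw [integral_mul_const, integral_const_mul, ← smul_eq_mul (c ^ Module.finrank ℝ E),
    pow_finrank_smul_integral_comp_smul φ hc]

lemma integrable_scale_mixture_kernel [SFinite ν] (hφm : StronglyMeasurable φ)
    (hφ : Integrable φ μ) (hr : Measurable r) (hr_pos : ∀ᵐ x ∂ν, 0 < r x)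
    (hg : Integrable g ν) :
    Integrable (fun z : E × X => r z.2 ^ Module.finrank ℝ E * φ (r z.2 • z.1) * g z.2)
      (μ.prod ν) := by
  have hmeas : AEStronglyMeasurable
      (fun z : E × X => r z.2 ^ Module.finrank ℝ E * φ (r z.2 • z.1) * g z.2) (μ.prod ν) :=
    (AEStronglyMeasurable.mul (Measurable.aestronglyMeasurable (by fun_prop))
      (hφm.comp_measurable (by fun_prop)).aestronglyMeasurable).mul hg.1.comp_snd
  rw [integrable_prod_iff' hmeas]
  constructor
  · filter_upwards [hr_pos] with x hx
    exact ((hφ.comp_smul hx.ne').const_mul _).mul_const _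
  · refine (hg.norm.const_mul (∫ y, ‖φ y‖ ∂μ)).congr ?_
    filter_upwards [hr_pos] with x hx
    rw [← integral_scale_mixture_kernel (fun y => ‖φ y‖) hx]
    simp only [norm_mul, norm_pow, norm_of_nonneg hx.le]

lemma integral_scale_mixture [SFinite ν] (hφm : StronglyMeasurable φ) (hφ : Integrable φ μ)
    (hr : Measurable r) (hr_pos : ∀ᵐ x ∂ν, 0 < r x) (hg : Integrable g ν) :
    ∫ y, ∫ x, r x ^ Module.finrank ℝ E * φ (r x • y) * g x ∂ν ∂μ =
      (∫ y, φ y ∂μ) * ∫ x, g x ∂ν := by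
  rw [integral_integral_swap (integrable_scale_mixture_kernel hφm hφ hr hr_pos hg),
    ← integral_const_mul]
  refine integral_congr_ae ?_
  filter_upwards [hr_pos] with x hx
  exact integral_scale_mixture_kernel φ hx (g x)

end ScaleMixture

lemma integrable_pow_mul_exp_neg_sq_div_two (k : ℕ) :
    Integrable fun x : ℝ => x ^ k * Real.exp (-x ^ 2 / 2) := by
  have h := integrable_rpow_mul_exp_neg_mul_sq (b := 1 / 2) (by norm_num) (s := k)
    (by linarith [k.cast_nonneg (α := ℝ)])
  simpa only [rpow_natCast, neg_mul, one_div_mul_eq_div, neg_div] using h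

lemma integral_mul_exp_neg_sq_div_two (f : ℝ → ℝ) :
    ∫ x, f x * Real.exp (-x ^ 2 / 2) = √(2 * π) * ∫ x, f x ∂ProbabilityTheory.gaussianReal 0 1 := by
  rw [ProbabilityTheory.integral_gaussianReal_eq_integral_smul one_ne_zero, ← integral_const_mul]
  simp only [ProbabilityTheory.gaussianPDFReal, NNReal.coe_one, mul_one, sub_zero, smul_eq_mul,
    mul_assoc, mul_inv_cancel_left₀ (show √(2 * π) ≠ 0 by positivity), mul_comm (f _)]

lemma integral_sq_gaussianReal_zero_one :
    ∫ x, x ^ 2 ∂ProbabilityTheory.gaussianReal 0 1 = 1 := by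
  rw [← ProbabilityTheory.variance_of_integral_eq_zero aemeasurable_id'
    ProbabilityTheory.integral_id_gaussianReal,
    ProbabilityTheory.variance_fun_id_gaussianReal, NNReal.coe_one]

section Gaussian

variable {ι : Type*} [Fintype ι]

lemma prod_pow_mul_exp_neg_dotProduct_self (e : ι → ℕ) (z : ι → ℝ) :
    (∏ m, z m ^ e m) * Real.exp (-(z ⬝ᵥ z) / 2) =
      ∏ m, z m ^ e m * Real.exp (-z m ^ 2 / 2) := by
  simp only [Finset.prod_mul_distrib, ← Real.exp_sum, ← Finset.sum_div, Finset.sum_neg_distrib,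
    dotProduct, sq]

lemma integrable_prod_pow_mul_exp_neg_dotProduct_self (e : ι → ℕ) :
    Integrable fun z : ι → ℝ => (∏ m, z m ^ e m) * Real.exp (-(z ⬝ᵥ z) / 2) := by
  simp only [prod_pow_mul_exp_neg_dotProduct_self]
  exact Integrable.fintype_prod fun m => integrable_pow_mul_exp_neg_sq_div_two (e m)

lemma integral_prod_pow_mul_exp_neg_dotProduct_self (e : ι → ℕ) :
    ∫ z : ι → ℝ, (∏ m, z m ^ e m) * Real.exp (-(z ⬝ᵥ z) / 2) =
      √(2 * π) ^ Fintype.card ι *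
        ∏ m, ∫ x, x ^ e m ∂ProbabilityTheory.gaussianReal 0 1 := by
  simp only [prod_pow_mul_exp_neg_dotProduct_self]
  rw [integral_fintype_prod_volume_eq_prod fun m x => x ^ e m * Real.exp (-x ^ 2 / 2)]
  simp only [integral_mul_exp_neg_sq_div_two, Finset.prod_mul_distrib, Finset.prod_const,
    Finset.card_univ]

lemma mulVec_apply_mul_mulVec_apply {κ R : Type*} [CommSemiring R] (B : Matrix κ ι R) (z : ι → R)
    (i j : κ) : (B *ᵥ z) i * (B *ᵥ z) j = ∑ k, ∑ l, B i k * B j l * (z k * z l) := by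
  simp only [mulVec, dotProduct, Finset.sum_mul_sum, mul_mul_mul_comm]

lemma mul_eq_prod_pow_single_add_single [DecidableEq ι] {M : Type*} [CommMonoid M] (z : ι → M)
    (k l : ι) : z k * z l = ∏ m, z m ^ (Pi.single k 1 + Pi.single l 1 : ι → ℕ) m := by
  simp only [Pi.add_apply, pow_add, Finset.prod_mul_distrib, Pi.single_apply, pow_ite, pow_one,
    pow_zero, Finset.prod_ite_eq', Finset.mem_univ, if_true]

lemma integrable_mul_mul_exp_neg_dotProduct_self (k l : ι) :
    Integrable fun z : ι → ℝ => z k * z l * Real.exp (-(z ⬝ᵥ z) / 2) := by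
  classical
  simp only [mul_eq_prod_pow_single_add_single _ k l]
  exact integrable_prod_pow_mul_exp_neg_dotProduct_self _

variable [DecidableEq ι]

lemma integral_mul_mul_exp_neg_dotProduct_self (k l : ι) :
    ∫ z : ι → ℝ, z k * z l * Real.exp (-(z ⬝ᵥ z) / 2) =
      √(2 * π) ^ Fintype.card ι * (1 : Matrix ι ι ℝ) k l := by
  simp only [mul_eq_prod_pow_single_add_single _ k l]
  rw [integral_prod_pow_mul_exp_neg_dotProduct_self]
  congr 1
  obtain rfl | hkl := eq_or_ne k l
  · rw [one_apply_eq]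
    refine Finset.prod_eq_one fun m _ => ?_
    obtain rfl | hm := eq_or_ne m k
    · simpa using integral_sq_gaussianReal_zero_one
    · simp [hm]
  · rw [one_apply_ne hkl]
    refine Finset.prod_eq_zero (Finset.mem_univ k) ?_
    simp [hkl]

section ChangeOfVariables

variable {F : Type*} [NormedAddCommGroup F] {B : Matrix ι ι ℝ}

lemma measurableEmbedding_toLin' (hB : IsUnit B) : MeasurableEmbedding (toLin' B) :=
  (LinearMap.continuous_of_finiteDimensional _).measurableEmbedding
    (mulVec_injective_iff_isUnit.2 hB)

lemma integrable_comp_mulVec_iff (hB : IsUnit B) {g : (ι → ℝ) → F} :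
    Integrable (fun z => g (B *ᵥ z)) ↔ Integrable g := by
  have hdet : B.det ≠ 0 := ((isUnit_iff_isUnit_det B).1 hB).ne_zero
  have h := (measurableEmbedding_toLin' hB).integrable_map_iff (μ := volume) (g := g)
  rw [Real.map_matrix_volume_pi_eq_smul_volume_pi hdet,
    integrable_smul_measure (by simpa using hdet) ENNReal.ofReal_ne_top] at h
  exact h.symm

lemma abs_det_smul_integral_comp_mulVec [NormedSpace ℝ F] (hB : IsUnit B) (g : (ι → ℝ) → F) :
    |B.det| • ∫ z, g (B *ᵥ z) = ∫ y, g y := by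
  have hdet : B.det ≠ 0 := ((isUnit_iff_isUnit_det B).1 hB).ne_zero
  have h := (measurableEmbedding_toLin' hB).integral_map (μ := volume) g
  rw [Real.map_matrix_volume_pi_eq_smul_volume_pi hdet, integral_smul_measure,
    ENNReal.toReal_ofReal (abs_nonneg _), abs_inv] at h
  exact ((inv_smul_eq_iff₀ (abs_ne_zero.2 hdet)).1 h).symm

end ChangeOfVariables

lemma mulVec_dotProduct_inv_mul_transpose_mulVec {R : Type*} [CommRing R] {B : Matrix ι ι R}
    (hB : IsUnit B) (z : ι → R) :
    (B *ᵥ z) ⬝ᵥ ((B * Bᵀ)⁻¹ *ᵥ (B *ᵥ z)) = z ⬝ᵥ z := by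
  have hdet : IsUnit B.det := (isUnit_iff_isUnit_det B).1 hB
  rw [mulVec_mulVec, Matrix.mul_inv_rev, Matrix.mul_assoc, nonsing_inv_mul _ hdet,
    Matrix.mul_one, ← transpose_nonsing_inv, mulVec_transpose, dotProduct_comm,
    ← dotProduct_mulVec, mulVec_mulVec, nonsing_inv_mul _ hdet, one_mulVec]

open scoped MatrixOrder in
lemma exists_eq_mul_transpose_of_posDef {A : Matrix ι ι ℝ} (hA : A.PosDef) :
    ∃ B : Matrix ι ι ℝ, IsUnit B ∧ A = B * Bᵀ := by
  simpa only [star_eq_conjTranspose, conjTranspose_eq_transpose_of_trivial] using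
    CStarAlgebra.isStrictlyPositive_iff_eq_mul_star_self.1 hA.isStrictlyPositive

lemma integrable_mul_mul_exp_neg_dotProduct_inv_mulVec {A : Matrix ι ι ℝ} (hA : A.PosDef)
    (i j : ι) : Integrable fun y : ι → ℝ => y i * y j * Real.exp (-(y ⬝ᵥ (A⁻¹ *ᵥ y)) / 2) := by
  obtain ⟨B, hB, rfl⟩ := exists_eq_mul_transpose_of_posDef hA
  rw [← integrable_comp_mulVec_iff hB]
  simp only [mulVec_dotProduct_inv_mul_transpose_mulVec hB, mulVec_apply_mul_mulVec_apply,
    Finset.sum_mul, mul_assoc (B i _ * B j _)]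
  exact integrable_finsetSum _ fun k _ => integrable_finsetSum _ fun l _ =>
    (integrable_mul_mul_exp_neg_dotProduct_self k l).const_mul _

lemma integral_mul_mul_exp_neg_dotProduct_inv_mulVec {A : Matrix ι ι ℝ} (hA : A.PosDef)
    (i j : ι) :
    ∫ y : ι → ℝ, y i * y j * Real.exp (-(y ⬝ᵥ (A⁻¹ *ᵥ y)) / 2) =
      √A.det * √(2 * π) ^ Fintype.card ι * A i j := by
  obtain ⟨B, hB, rfl⟩ := exists_eq_mul_transpose_of_posDef hA
  have hint (k l : ι) : Integrable fun z : ι → ℝ =>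
      B i k * B j l * (z k * z l * Real.exp (-(z ⬝ᵥ z) / 2)) :=
    (integrable_mul_mul_exp_neg_dotProduct_self k l).const_mul _
  rw [← abs_det_smul_integral_comp_mulVec hB]
  simp only [mulVec_dotProduct_inv_mul_transpose_mulVec hB, mulVec_apply_mul_mulVec_apply,
    Finset.sum_mul, mul_assoc (B i _ * B j _)]
  rw [integral_finsetSum _ fun k _ => integrable_finsetSum _ fun l _ => hint k l]
  simp only [integral_finsetSum _ fun l _ => hint _ l, integral_const_mul,
    integral_mul_mul_exp_neg_dotProduct_self]
  simp only [one_apply, mul_ite, mul_one, mul_zero, Finset.sum_ite_eq, Finset.mem_univ, if_true,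
    ← Finset.sum_mul, det_mul, det_transpose, sqrt_mul_self_eq_abs, Matrix.mul_apply,
    transpose_apply, smul_eq_mul]
  ring

end Gaussian

/-- The moment of order `s` of the unnormalised posterior mixing density `e^{-uξ/2} p(ξ)` on
`(0, ∞)`. Both the constant `c⁻¹` and the mixture integral of an elliptical conditional density are
of this form, with `u` a squared Mahalanobis distance. -/
noncomputable def mixingMoment (p : ℝ → ℝ) (u s : ℝ) : ℝ :=
  ∫ ξ in Set.Ioi (0 : ℝ), ξ ^ s * Real.exp (-(u * ξ) / 2) * p ξ

section Mixture

lemma rpow_add_natCast_div_two {ξ : ℝ} (hξ : 0 < ξ) (s : ℝ) (k : ℕ) :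
    ξ ^ (s + (k : ℝ) / 2) = √ξ ^ k * ξ * ξ ^ (s - 1) := by
  rw [rpow_add hξ, rpow_div_two_eq_sqrt _ hξ.le, rpow_natCast, rpow_sub_one hξ.ne', mul_assoc,
    mul_div_cancel₀ _ hξ.ne', mul_comm]

lemma exp_neg_quadratic_add_mul_eq_sqrt_smul {ι : Type*} [Fintype ι] (M : Matrix ι ι ℝ)
    (y : ι → ℝ) {ξ : ℝ} (hξ : 0 ≤ ξ) (u : ℝ) :
    Real.exp (-((y ⬝ᵥ (M *ᵥ y) + u) * ξ) / 2) =
      Real.exp (-((√ξ • y) ⬝ᵥ (M *ᵥ (√ξ • y))) / 2) * Real.exp (-(u * ξ) / 2) := by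
  rw [mulVec_smul, dotProduct_smul, smul_dotProduct, smul_smul, mul_self_sqrt hξ, smul_eq_mul,
    ← Real.exp_add]
  ring_nf

lemma rpow_mul_two_pi_rpow_mul_sqrt_eq_one {d : ℝ} (hd : 0 < d) (k : ℕ) :
    d ^ (-(1 : ℝ) / 2) * (2 * π) ^ (-(k : ℝ) / 2) * (√d * √(2 * π) ^ k) = 1 := by
  rw [neg_div, neg_div, rpow_neg hd.le, rpow_neg (by positivity), ← sqrt_eq_rpow,
    rpow_div_two_eq_sqrt _ (by positivity), rpow_natCast, ← mul_inv,
    inv_mul_cancel₀ (by positivity)]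

variable {ι : Type*} [Fintype ι] [DecidableEq ι] {A : Matrix ι ι ℝ} {p : ℝ → ℝ} {u s : ℝ}

lemma integral_mul_mul_mixingMoment (hA : A.PosDef)
    (hp : IntegrableOn (fun ξ => ξ ^ (s - 1) * Real.exp (-(u * ξ) / 2) * p ξ) (Set.Ioi 0))
    (i j : ι) :
    ∫ y : ι → ℝ, y i * y j *
        mixingMoment p (y ⬝ᵥ (A⁻¹ *ᵥ y) + u) (s + (Fintype.card ι : ℝ) / 2) =
      √A.det * √(2 * π) ^ Fintype.card ι * A i j * mixingMoment p u (s - 1) := by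
  let φ : (ι → ℝ) → ℝ := fun y => y i * y j * Real.exp (-(y ⬝ᵥ (A⁻¹ *ᵥ y)) / 2)
  have hφ : StronglyMeasurable φ := Continuous.stronglyMeasurable (by fun_prop)
  have hkernel (y : ι → ℝ) {ξ : ℝ} (hξ : 0 < ξ) :
      y i * y j * (ξ ^ (s + (Fintype.card ι : ℝ) / 2) *
          Real.exp (-((y ⬝ᵥ (A⁻¹ *ᵥ y) + u) * ξ) / 2) * p ξ) =
        √ξ ^ Module.finrank ℝ (ι → ℝ) * φ (√ξ • y) *
          (ξ ^ (s - 1) * Real.exp (-(u * ξ) / 2) * p ξ) := by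
    have hij : (√ξ • y) i * (√ξ • y) j = ξ * (y i * y j) := by
      rw [Pi.smul_apply, Pi.smul_apply, smul_mul_smul_comm, mul_self_sqrt hξ.le, smul_eq_mul]
    rw [Module.finrank_fintype_fun_eq_card, rpow_add_natCast_div_two hξ,
      exp_neg_quadratic_add_mul_eq_sqrt_smul _ _ hξ.le]
    simp only [φ, hij]
    ring
  calc ∫ y : ι → ℝ, y i * y j *
        mixingMoment p (y ⬝ᵥ (A⁻¹ *ᵥ y) + u) (s + (Fintype.card ι : ℝ) / 2)
    _ = ∫ y, ∫ ξ in Set.Ioi (0 : ℝ), √ξ ^ Module.finrank ℝ (ι → ℝ) * φ (√ξ • y) *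
          (ξ ^ (s - 1) * Real.exp (-(u * ξ) / 2) * p ξ) := by
      simp only [mixingMoment, ← integral_const_mul]
      exact integral_congr_ae <| .of_forall fun y =>
        setIntegral_congr_fun measurableSet_Ioi fun ξ hξ => hkernel y hξ
    _ = (∫ y, φ y) * mixingMoment p u (s - 1) :=
      integral_scale_mixture hφ (integrable_mul_mul_exp_neg_dotProduct_inv_mulVec hA i j)
        (by fun_prop) ((ae_restrict_mem measurableSet_Ioi).mono fun ξ hξ => sqrt_pos.2 hξ) hp
    _ = √A.det * √(2 * π) ^ Fintype.card ι * A i j * mixingMoment p u (s - 1) := by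
      rw [integral_mul_mul_exp_neg_dotProduct_inv_mulVec hA]

theorem elliptical_conditional_covariance_general (hA : A.PosDef) (ν : ι → ℝ)
    (hc : mixingMoment p u s ≠ 0)
    (hp : IntegrableOn (fun ξ => ξ ^ (s - 1) * Real.exp (-(u * ξ) / 2) * p ξ) (Set.Ioi 0))
    (i j : ι) :
    ∫ y : ι → ℝ, (y i - ν i) * (y j - ν j) *
        ((mixingMoment p u s)⁻¹ *
          (A.det ^ (-(1 : ℝ) / 2) * (2 * π) ^ (-(Fintype.card ι : ℝ) / 2) *
            mixingMoment p ((y - ν) ⬝ᵥ (A⁻¹ *ᵥ (y - ν)) + u) (s + (Fintype.card ι : ℝ) / 2))) =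
      mixingMoment p u (s - 1) / mixingMoment p u s * A i j := by
  have hnorm := rpow_mul_two_pi_rpow_mul_sqrt_eq_one hA.det_pos (Fintype.card ι)
  have hmoment := integral_mul_mul_mixingMoment hA hp i j
  rw [← integral_sub_right_eq_self _ ν] at hmoment
  simp only [Pi.sub_apply] at hmoment
  set c := mixingMoment p u s
  set K := A.det ^ (-(1 : ℝ) / 2) * (2 * π) ^ (-(Fintype.card ι : ℝ) / 2)
  have hconst (a b : ℝ) : a * (c⁻¹ * (K * b)) = K / c * (a * b) := by ring
  simp only [hconst, integral_const_mul, hmoment]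
  rw [div_mul_eq_mul_div, div_mul_eq_mul_div, div_left_inj' hc]
  linear_combination A i j * mixingMoment p u (s - 1) * hnorm

end Mixture

/-- Proposition 1, conditional covariance: the covariance of the
conditional elliptical density of `y2` given `y1` equals `E[ξ̂⁻¹] Σ_{22|1}`, where
`ξ̂` follows the posterior mixing density `p(ξ|y1) ∝ ξ^{n1/2} e^{-ξ u1/2} p(ξ)`. -/
theorem elliptical_conditional_covariance
    (n1 n2 : ℕ) (p : ℝ → ℝ) (hp_meas : Measurable p) (hp_nonneg : ∀ ξ, 0 ≤ p ξ)
    (hp_zero : ∀ ξ ≤ (0 : ℝ), p ξ = 0)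
    (hp_int : ∫ ξ in Set.Ioi (0 : ℝ), p ξ = 1)
    (S11 : Matrix (Fin n1) (Fin n1) ℝ) (S12 : Matrix (Fin n1) (Fin n2) ℝ)
    (S21 : Matrix (Fin n2) (Fin n1) ℝ) (S22 : Matrix (Fin n2) (Fin n2) ℝ)
    (hS21 : S21 = S12ᵀ)
    (S : Matrix (Fin n1 ⊕ Fin n2) (Fin n1 ⊕ Fin n2) ℝ)
    (hS : S = fromBlocks S11 S12 S21 S22) (hSpd : S.PosDef)
    (μ1 : Fin n1 → ℝ) (μ2 : Fin n2 → ℝ)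
    (μ21 : (Fin n1 → ℝ) → Fin n2 → ℝ)
    (hμ21 : ∀ y1, μ21 y1 = μ2 + S21 *ᵥ (S11⁻¹ *ᵥ (y1 - μ1)))
    (S221 : Matrix (Fin n2) (Fin n2) ℝ) (hS221 : S221 = S22 - S21 * S11⁻¹ * S12)
    (u1 : (Fin n1 → ℝ) → ℝ)
    (hu1 : ∀ y1, u1 y1 = (y1 - μ1) ⬝ᵥ (S11⁻¹ *ᵥ (y1 - μ1)))
    (u21 : (Fin n1 → ℝ) → (Fin n2 → ℝ) → ℝ)
    (hu21 : ∀ y1 y2, u21 y1 y2 = (y2 - μ21 y1) ⬝ᵥ (S221⁻¹ *ᵥ (y2 - μ21 y1))) :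
    ∀ y1 : Fin n1 → ℝ,
      IntegrableOn
        (fun ξ => ξ ^ ((n1 : ℝ) / 2) * Real.exp (-(ξ * u1 y1) / 2) * p ξ)
        (Set.Ioi (0 : ℝ)) →
      0 < (∫ ξ in Set.Ioi (0 : ℝ),
            ξ ^ ((n1 : ℝ) / 2) * Real.exp (-(ξ * u1 y1) / 2) * p ξ) →
      IntegrableOn
        (fun ξ => ξ ^ ((n1 : ℝ) / 2 - 1) *
          Real.exp (-(u1 y1 * ξ) / 2) * p ξ) (Set.Ioi (0 : ℝ)) →
      ∀ i j : Fin n2,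
      (∫ y2 : Fin n2 → ℝ,
        (y2 i - μ21 y1 i) * (y2 j - μ21 y1 j) *
          ((∫ ξ in Set.Ioi (0 : ℝ),
              ξ ^ ((n1 : ℝ) / 2) * Real.exp (-(ξ * u1 y1) / 2) * p ξ)⁻¹ *
            (S221.det ^ (-(1 : ℝ) / 2) * (2 * π) ^ (-(n2 : ℝ) / 2) *
              ∫ ξ in Set.Ioi (0 : ℝ),
                ξ ^ (((n1 : ℝ) + (n2 : ℝ)) / 2) *
                  Real.exp (-((u21 y1 y2 + u1 y1) * ξ) / 2) * p ξ))) =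
        ((∫ ξ in Set.Ioi (0 : ℝ),
            ξ ^ ((n1 : ℝ) / 2 - 1) * Real.exp (-(u1 y1 * ξ) / 2) * p ξ) /
          (∫ ξ in Set.Ioi (0 : ℝ),
            ξ ^ ((n1 : ℝ) / 2) * Real.exp (-(u1 y1 * ξ) / 2) * p ξ)) *
          S221 i j := by
  intro y1 _ hc hint i j
  have hS221_posDef : S221.PosDef := by
    subst hS221 hS21 hS
    rw [← conjTranspose_eq_transpose_of_trivial] at hSpd ⊢
    exact posDef_schur_complement₁₁ hSpd
  simpa only [mixingMoment, hu21, Fintype.card_fin, add_div, mul_comm (u1 y1)] using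
    elliptical_conditional_covariance_general hS221_posDef (μ21 y1) (p := p) (u := u1 y1)
      (s := (n1 : ℝ) / 2) (by simpa only [mixingMoment, mul_comm] using hc.ne') hint i j
end
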